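/- arXiv:math/0502547 — 2 statements merged into one kernel-verified Lean document; each statement's English description precedes it below -/
import Mathlib

section
/- The configuration pairing between the Forest module Φ_n and the Diagram module Δ_n descends to a perfect pairing between Pois_k(n) and Siop_k(n) for every k. -/
open scoped Classical

noncomputable section

namespace GTPairing

/-- Planar binary trees with natural-number-labeled leaves.  A `PTree` is a rooted
binary (trivalent) tree embedded in the upper half plane; `node l r` has `l` as its
left branch and `r` as its right branch. -/
inductive PTree : Type
  | leaf (a : ℕ) : PTree
  | node (l r : PTree) : PTree
  deriving DecidableEq

namespace PTree

/-- The labels of the leaves, in planar (left-to-right) order. -/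
def leaves : PTree → List ℕ
  | .leaf a => [a]
  | .node l r => l.leaves ++ r.leaves

/-- The internal (trivalent) vertices of a planar tree, recorded as the subtrees they
support, listed in the left-to-right (in-order) planar order. -/
def nodesList : PTree → List PTree
  | .leaf _ => []
  | .node l r => l.nodesList ++ (PTree.node l r :: r.nodesList)

/-- `nadir t i j` is the nadir (lowest vertex) of the shortest path in `t` between the
leaves labeled `i` and `j`, recorded as the subtree it supports, together with `true`
if the leaf labeled `i` lies over the left branch of the nadir (and `j` over the
right), i.e. if the path travels from left to right at its nadir. -/
def nadir : PTree → ℕ → ℕ → Option (PTree × Bool)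
  | .leaf _, _, _ => none
  | .node l r, i, j =>
    if i ∈ l.leaves ∧ j ∈ r.leaves then some (.node l r, true)
    else if j ∈ l.leaves ∧ i ∈ r.leaves then some (.node l r, false)
    else if i ∈ l.leaves ∧ j ∈ l.leaves then nadir l i j
    else if i ∈ r.leaves ∧ j ∈ r.leaves then nadir r i j
    else none

/-- Fusing: `graft t m s` identifies the root edge of `s` with the leaf edge of `t`
labeled by `m`, i.e. substitutes `s` for the leaf labeled `m`. -/
def graft : PTree → ℕ → PTree → PTree
  | .leaf a, m, s => if a = m then s else .leaf a
  | .node l r, m, s => .node (l.graft m s) (r.graft m s)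

/-- Relabel the leaves of a tree. -/
def relabel (f : ℕ → ℕ) : PTree → PTree
  | .leaf a => .leaf (f a)
  | .node l r => .node (l.relabel f) (r.relabel f)

end PTree

/-- The nadir of the path between the two endpoints of an edge, forgetting planar
direction data. -/
def nadirFst (t : PTree) (e : ℕ × ℕ) : Option PTree := (t.nadir e.1 e.2).map Prod.fst

/-- The (even) configuration pairing between a set of oriented edges `E` (a Graph) and
a planar binary tree `t` (a Tree): it is `0` unless `e ↦ β_{G,T}(e)` (sending an edge
to the nadir of the path between the corresponding leaves) is a bijection from the
edges onto the internal vertices of `t`, in which case it is `(-1)^N` where `N` is the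
number of edges `(i,j)` whose path travels from left to right (`i` over the left
branch) at its nadir. -/
def pairPT (E : Multiset (ℕ × ℕ)) (t : PTree) : ℤ :=
  if E.map (nadirFst t) = ((t.nodesList.map some : List (Option PTree)) : Multiset (Option PTree))
  then (-1) ^ (Multiset.card (E.filter (fun e => (t.nadir e.1 e.2).map Prod.snd = some true)))
  else 0

/-- A Tree with leaves labeled bijectively by the finite set `S`. -/
def IsTreeOn (S : Finset ℕ) (t : PTree) : Prop := t.leaves.Nodup ∧ t.leaves.toFinset = S

def TreeOn (S : Finset ℕ) : Type := {t : PTree // IsTreeOn S t}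

/-- Adjacency relation determined by a multiset of oriented edges. -/
def Adj (E : Multiset (ℕ × ℕ)) (a b : ℕ) : Prop := (a, b) ∈ E ∨ (b, a) ∈ E

/-- Connectivity of an edge multiset on the vertex set `S`. -/
def ConnOn (S : Finset ℕ) (E : Multiset (ℕ × ℕ)) : Prop :=
  ∀ a ∈ S, ∀ b ∈ S, Relation.ReflTransGen (Adj E) a b

/-- A Graph on the vertex set `S`: a connected graph with oriented edges (each edge
joining two distinct vertices of `S`). -/
def IsGraphOn (S : Finset ℕ) (E : Multiset (ℕ × ℕ)) : Prop :=
  (∀ e ∈ E, e.1 ∈ S ∧ e.2 ∈ S ∧ e.1 ≠ e.2) ∧ ConnOn S E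

def GraphOn (S : Finset ℕ) : Type := {E : Multiset (ℕ × ℕ) // IsGraphOn S E}

variable (R : Type) [CommRing R]

/-- `Θ_S`: the free module on Trees with leaves labeled by `S`. -/
abbrev ThetaF (S : Finset ℕ) : Type := TreeOn S →₀ R

/-- `Γ_S`: the free module on Graphs with vertices labeled by `S`. -/
abbrev GammaF (S : Finset ℕ) : Type := GraphOn S →₀ R

variable {R}

/-- The configuration pairing, extended bilinearly to the free modules. -/
def pairGT {S : Finset ℕ} (β : GammaF R S) (α : ThetaF R S) : R :=
  β.sum fun G b => α.sum fun T a => b * a * ((pairPT G.1 T.1 : ℤ) : R)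

/-- The basis element of a free module on a subtype, when the defining property holds
(and `0` otherwise; in all uses below the property does hold). -/
def bsingle {α : Type} (P : α → Prop) (a : α) : ({x : α // P x} →₀ R) :=
  if h : P a then Finsupp.single ⟨a, h⟩ (1 : R) else 0

variable (R)

/-- Jacobi combinations of Trees: the sum of the three Trees obtained from the unique
3-leaf Tree by fusing Trees `A`, `B`, `C` onto its three leaves in the three
cyclically related orders and fusing a Tree `D` onto its root (at the leaf `m` of `D`). -/
def jacobiSet (S : Finset ℕ) : Set (ThetaF R S) :=
  { x | ∃ (D A B C : PTree) (m : ℕ) (T₁ T₂ T₃ : TreeOn S),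
      D.leaves.Nodup ∧ m ∈ D.leaves ∧
      T₁.1 = D.graft m (.node (.node A B) C) ∧
      T₂.1 = D.graft m (.node (.node B C) A) ∧
      T₃.1 = D.graft m (.node (.node C A) B) ∧
      x = Finsupp.single T₁ 1 + Finsupp.single T₂ 1 + Finsupp.single T₃ 1 }

/-- Symmetry combinations of Trees: the sum of two Trees which are isomorphic as
labeled graphs and have the same planar ordering of input edges at every internal
vertex except exactly one (here: exactly the vertex at the leaf `m` of `D`, whose two
branches `A` and `B` are switched). -/
def treeSymmSet (S : Finset ℕ) : Set (ThetaF R S) :=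
  { x | ∃ (D A B : PTree) (m : ℕ) (T₁ T₂ : TreeOn S),
      D.leaves.Nodup ∧ m ∈ D.leaves ∧
      T₁.1 = D.graft m (.node A B) ∧
      T₂.1 = D.graft m (.node B A) ∧
      x = Finsupp.single T₁ 1 + Finsupp.single T₂ 1 }

/-- The submodule `J_S ⊆ Θ_S` generated by Jacobi and symmetry combinations. -/
def Jsub (S : Finset ℕ) : Submodule R (ThetaF R S) :=
  Submodule.span R (jacobiSet R S ∪ treeSymmSet R S)

/-- Arnold combinations of Graphs: sums of three Graphs which agree except on edges
among three fixed distinct vertices `i`, `j`, `k`, where they contain respectively the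
edge pairs `{i→j, j→k}`, `{j→k, k→i}` and `{k→i, i→j}`. -/
def arnoldSet (S : Finset ℕ) : Set (GammaF R S) :=
  { x | ∃ (i j k : ℕ) (E₀ : Multiset (ℕ × ℕ)) (G₁ G₂ G₃ : GraphOn S),
      i ≠ j ∧ j ≠ k ∧ i ≠ k ∧
      G₁.1 = (i, j) ::ₘ (j, k) ::ₘ E₀ ∧
      G₂.1 = (j, k) ::ₘ (k, i) ::ₘ E₀ ∧
      G₃.1 = (k, i) ::ₘ (i, j) ::ₘ E₀ ∧
      x = Finsupp.single G₁ 1 + Finsupp.single G₂ 1 + Finsupp.single G₃ 1 }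

/-- Symmetry combinations of Graphs: sums of two Graphs which differ only in the
orientation of exactly one edge. -/
def graphSymmSet (S : Finset ℕ) : Set (GammaF R S) :=
  { x | ∃ (i j : ℕ) (E₀ : Multiset (ℕ × ℕ)) (G₁ G₂ : GraphOn S),
      G₁.1 = (i, j) ::ₘ E₀ ∧ G₂.1 = (j, i) ::ₘ E₀ ∧
      x = Finsupp.single G₁ 1 + Finsupp.single G₂ 1 }

/-- Graphs having two edges with the same pair of endpoints. -/
def doubledSet (S : Finset ℕ) : Set (GammaF R S) :=
  { x | ∃ (i j : ℕ) (E₀ : Multiset (ℕ × ℕ)) (G : GraphOn S),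
      (G.1 = (i, j) ::ₘ (i, j) ::ₘ E₀ ∨ G.1 = (i, j) ::ₘ (j, i) ::ₘ E₀) ∧
      x = Finsupp.single G 1 }

/-- The submodule `I_S ⊆ Γ_S` generated by Arnold combinations, symmetry combinations
and Graphs with doubled edges. -/
def Isub (S : Finset ℕ) : Submodule R (GammaF R S) :=
  Submodule.span R (arnoldSet R S ∪ graphSymmSet R S ∪ doubledSet R S)

/-- `Lie(S) = Θ_S / J_S`. -/
abbrev LieQ (S : Finset ℕ) : Type := ThetaF R S ⧸ Jsub R S

/-- `Eil(S) = Γ_S / I_S`. -/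
abbrev EilQ (S : Finset ℕ) : Type := GammaF R S ⧸ Isub R S

end GTPairing

namespace GTPairing

/-- A Forest on `{0,…,n-1}`: an unordered collection of Trees whose leaf-label sets
partition `{0,…,n-1}`. -/
def IsForestOn (n : ℕ) (F : Finset PTree) : Prop :=
  (∀ t ∈ F, t.leaves.Nodup) ∧
  (∀ t ∈ F, ∀ s ∈ F, t ≠ s → ∀ a ∈ t.leaves, a ∉ s.leaves) ∧
  (∀ t ∈ F, ∀ a ∈ t.leaves, a < n) ∧
  (∀ a, a < n → ∃ t ∈ F, a ∈ t.leaves)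

def ForestOn (n : ℕ) : Type := {F : Finset PTree // IsForestOn n F}

/-- The total number of internal vertices of a Forest. -/
def forestDeg (F : Finset PTree) : ℕ := ∑ t ∈ F, t.nodesList.length

/-- A Diagram on `{0,…,n-1}`: a possibly disconnected graph with oriented edges
joining distinct vertices in `{0,…,n-1}`. -/
def IsDiagOn (n : ℕ) (E : Multiset (ℕ × ℕ)) : Prop :=
  ∀ e ∈ E, e.1 < n ∧ e.2 < n ∧ e.1 ≠ e.2

def DiagOn (n : ℕ) : Type := {E : Multiset (ℕ × ℕ) // IsDiagOn n E}

variable (R : Type) [CommRing R]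

/-- `Φ_n`: the free module on Forests. -/
abbrev PhiF (n : ℕ) : Type := ForestOn n →₀ R

/-- `Δ_n`: the free module on Diagrams. -/
abbrev DeltaF (n : ℕ) : Type := DiagOn n →₀ R

variable {R}

/-- The edges of a Diagram with both endpoints among the leaves of the tree `t`. -/
def edgesIn (E : Multiset (ℕ × ℕ)) (t : PTree) : Multiset (ℕ × ℕ) :=
  E.filter fun e => e.1 ∈ t.leaves ∧ e.2 ∈ t.leaves

/-- `ρ(D) = ρ(F)`: the partition of the vertices by connected components of the
Diagram `E` coincides with the partition by the component Trees of the Forest `F`,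
i.e. every edge joins two leaves of a single tree and the edges within each tree
connect that tree's leaves. -/
def sameRho (E : Multiset (ℕ × ℕ)) (F : Finset PTree) : Prop :=
  (∀ e ∈ E, ∃ t ∈ F, e.1 ∈ t.leaves ∧ e.2 ∈ t.leaves) ∧
  ∀ t ∈ F, ConnOn t.leaves.toFinset (edgesIn E t)

/-- The configuration pairing between a Diagram and a Forest: zero unless
`ρ(D) = ρ(F)`, in which case it is the product over the component Trees of the
configuration pairings with the matching component Graphs. -/
def pairDF (E : Multiset (ℕ × ℕ)) (F : Finset PTree) : ℤ :=
  if sameRho E F then ∏ t ∈ F, pairPT (edgesIn E t) t else 0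

/-- The Diagram–Forest configuration pairing, extended bilinearly. -/
def pairDFF {n : ℕ} (y : DeltaF R n) (x : PhiF R n) : R :=
  y.sum fun D c => x.sum fun F d => c * d * ((pairDF D.1 F.1 : ℤ) : R)

variable (R)

/-- Jacobi combinations of Forests: a Jacobi combination of Trees in one component,
all other component Trees fixed. -/
def forestJacobiSet (n : ℕ) : Set (PhiF R n) :=
  { x | ∃ (F₀ : Finset PTree) (D A B C : PTree) (m : ℕ) (F₁ F₂ F₃ : ForestOn n),
      D.leaves.Nodup ∧ m ∈ D.leaves ∧
      D.graft m (.node (.node A B) C) ∉ F₀ ∧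
      D.graft m (.node (.node B C) A) ∉ F₀ ∧
      D.graft m (.node (.node C A) B) ∉ F₀ ∧
      F₁.1 = insert (D.graft m (.node (.node A B) C)) F₀ ∧
      F₂.1 = insert (D.graft m (.node (.node B C) A)) F₀ ∧
      F₃.1 = insert (D.graft m (.node (.node C A) B)) F₀ ∧
      x = Finsupp.single F₁ 1 + Finsupp.single F₂ 1 + Finsupp.single F₃ 1 }

/-- Symmetry combinations of Forests: a symmetry combination of Trees in one
component, all other component Trees fixed. -/
def forestSymmSet (n : ℕ) : Set (PhiF R n) :=
  { x | ∃ (F₀ : Finset PTree) (D A B : PTree) (m : ℕ) (F₁ F₂ : ForestOn n),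
      D.leaves.Nodup ∧ m ∈ D.leaves ∧
      D.graft m (.node A B) ∉ F₀ ∧ D.graft m (.node B A) ∉ F₀ ∧
      F₁.1 = insert (D.graft m (.node A B)) F₀ ∧
      F₂.1 = insert (D.graft m (.node B A)) F₀ ∧
      x = Finsupp.single F₁ 1 + Finsupp.single F₂ 1 }

/-- The submodule `J_n ⊆ Φ_n`. -/
def JsubF (n : ℕ) : Submodule R (PhiF R n) :=
  Submodule.span R (forestJacobiSet R n ∪ forestSymmSet R n)

/-- Arnold combinations of Diagrams. -/
def arnoldSetD (n : ℕ) : Set (DeltaF R n) :=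
  { x | ∃ (i j k : ℕ) (E₀ : Multiset (ℕ × ℕ)) (G₁ G₂ G₃ : DiagOn n),
      i ≠ j ∧ j ≠ k ∧ i ≠ k ∧
      G₁.1 = (i, j) ::ₘ (j, k) ::ₘ E₀ ∧
      G₂.1 = (j, k) ::ₘ (k, i) ::ₘ E₀ ∧
      G₃.1 = (k, i) ::ₘ (i, j) ::ₘ E₀ ∧
      x = Finsupp.single G₁ 1 + Finsupp.single G₂ 1 + Finsupp.single G₃ 1 }

/-- Symmetry combinations of Diagrams: two Diagrams differing in the orientation of
exactly one edge. -/
def diagSymmSet (n : ℕ) : Set (DeltaF R n) :=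
  { x | ∃ (i j : ℕ) (E₀ : Multiset (ℕ × ℕ)) (G₁ G₂ : DiagOn n),
      G₁.1 = (i, j) ::ₘ E₀ ∧ G₂.1 = (j, i) ::ₘ E₀ ∧
      x = Finsupp.single G₁ 1 + Finsupp.single G₂ 1 }

/-- Diagrams having two edges with the same pair of endpoints. -/
def doubledSetD (n : ℕ) : Set (DeltaF R n) :=
  { x | ∃ (i j : ℕ) (E₀ : Multiset (ℕ × ℕ)) (G : DiagOn n),
      (G.1 = (i, j) ::ₘ (i, j) ::ₘ E₀ ∨ G.1 = (i, j) ::ₘ (j, i) ::ₘ E₀) ∧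
      x = Finsupp.single G 1 }

/-- The submodule `I_n ⊆ Δ_n`. -/
def IsubD (n : ℕ) : Submodule R (DeltaF R n) :=
  Submodule.span R (arnoldSetD R n ∪ diagSymmSet R n ∪ doubledSetD R n)

/-- `Pois(n) = Φ_n / J_n`. -/
abbrev PoisQ (n : ℕ) : Type := PhiF R n ⧸ JsubF R n

/-- `Siop(n) = Δ_n / I_n`. -/
abbrev SiopQ (n : ℕ) : Type := DeltaF R n ⧸ IsubD R n

/-- `Φ_n^k`: the span of Forests with `k` internal vertices in total. -/
def PhiK (n k : ℕ) : Submodule R (PhiF R n) :=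
  Submodule.span R {x | ∃ F : ForestOn n, forestDeg F.1 = k ∧ x = Finsupp.single F 1}

/-- `Δ_n^k`: the span of Diagrams with `k` edges. -/
def DeltaK (n k : ℕ) : Submodule R (DeltaF R n) :=
  Submodule.span R {x | ∃ D : DiagOn n, Multiset.card D.1 = k ∧ x = Finsupp.single D 1}

/-- `Pois_k(n)`: the image of `Φ_n^k` in `Pois(n)`. -/
def PoisK (n k : ℕ) : Submodule R (PoisQ R n) := (PhiK R n k).map (JsubF R n).mkQ

/-- `Siop_k(n)`: the image of `Δ_n^k` in `Siop(n)`. -/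
def SiopK (n k : ℕ) : Submodule R (SiopQ R n) := (DeltaK R n k).map (IsubD R n).mkQ

end GTPairing

namespace GTPairing
open MvPolynomial

abbrev MP := MvPolynomial (ℕ × ℕ) ℤ

/-- linear form of a node -/
def ell : PTree → MP
  | .leaf _ => 0
  | .node l r => ∑ i ∈ l.leaves.toFinset, ∑ j ∈ r.leaves.toFinset, (X (j, i) - X (i, j))

def cv : PTree → ℕ × ℕ → ℤ
  | .leaf _, _ => 0
  | .node l r, e => (if e.1 ∈ r.leaves ∧ e.2 ∈ l.leaves then 1 else 0)
      - (if e.1 ∈ l.leaves ∧ e.2 ∈ r.leaves then 1 else 0)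

lemma pderiv_ell (v : PTree) (e : ℕ × ℕ) : pderiv e (ell v) = C (cv v e) := by
  cases v with
  | leaf a => simp [ell, cv]
  | node l r =>
    obtain ⟨a, b⟩ := e
    simp only [ell, cv, map_sum, map_sub, pderiv_X, Pi.single_apply, Prod.mk.injEq,
      Finset.sum_sub_distrib]
    congr 1
    · by_cases h1 : a ∈ r.leaves <;> by_cases h2 : b ∈ l.leaves <;>
        simp [ite_and, Finset.sum_ite_eq', h1, h2]
    · by_cases h1 : a ∈ l.leaves <;> by_cases h2 : b ∈ r.leaves <;>
        simp [ite_and, Finset.sum_ite_eq', h1, h2]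

lemma coeff_zero_ell (v : PTree) : constantCoeff (ell v) = 0 := by
  cases v with
  | leaf a => simp [ell]
  | node l r => simp [ell]

lemma ell_homog (v : PTree) : (ell v).IsHomogeneous 1 := by
  cases v with
  | leaf a => exact isHomogeneous_zero _ _ _
  | node l r =>
    refine IsHomogeneous.sum _ _ _ fun i _ => IsHomogeneous.sum _ _ _ fun j _ => ?_
    exact (isHomogeneous_X _ _).sub (isHomogeneous_X _ _)

/-- polynomial of a tree -/
def tp (t : PTree) : MP := (t.nodesList.map ell).prod

lemma tp_leaf (a : ℕ) : tp (.leaf a) = 1 := by simp [tp, PTree.nodesList]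
lemma tp_node (l r : PTree) : tp (.node l r) = tp l * tp r * ell (.node l r) := by
  simp [tp, PTree.nodesList]; ring

lemma tp_homog (t : PTree) : (tp t).IsHomogeneous t.nodesList.length := by
  induction t with
  | leaf a => rw [tp_leaf]; exact isHomogeneous_one _ _
  | node l r hl hr =>
    rw [tp_node]
    have := (hl.mul hr).mul (ell_homog (.node l r))
    convert this using 1
    simp [PTree.nodesList]; ring

lemma leaves_ne (t : PTree) : t.leaves ≠ [] := by
  induction t with
  | leaf a => simp [PTree.leaves]
  | node l r hl hr => simp [PTree.leaves, hl]

lemma exists_leaf (t : PTree) : ∃ a, a ∈ t.leaves := List.exists_mem_of_ne_nil _ (leaves_ne t)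

lemma nodes_sub {t v : PTree} (h : v ∈ t.nodesList) : ∀ a ∈ v.leaves, a ∈ t.leaves := by
  induction t with
  | leaf a => simp [PTree.nodesList] at h
  | node l r hl hr =>
    simp only [PTree.nodesList, List.mem_append, List.mem_cons] at h
    intro a ha
    rcases h with h | rfl | h
    · simp [PTree.leaves, hl h a ha]
    · exact ha
    · simp [PTree.leaves, hr h a ha]

lemma nodes_len {t v : PTree} (h : v ∈ t.nodesList) : v.leaves.length ≤ t.leaves.length := by
  induction t with
  | leaf a => simp [PTree.nodesList] at h
  | node l r hl hr =>
    simp only [PTree.nodesList, List.mem_append, List.mem_cons] at h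
    rcases h with h | rfl | h
    · have := hl h; simp [PTree.leaves]; omega
    · exact le_rfl
    · have := hr h; simp [PTree.leaves]; omega

lemma leaves_pos (t : PTree) : 0 < t.leaves.length := List.length_pos_iff.2 (leaves_ne t)

lemma nodup_node {l r : PTree} (h : (PTree.node l r).leaves.Nodup) :
    l.leaves.Nodup ∧ r.leaves.Nodup ∧ ∀ a ∈ l.leaves, a ∉ r.leaves := by
  simp only [PTree.leaves] at h
  rw [List.nodup_append] at h
  exact ⟨h.1, h.2.1, fun a ha hb => h.2.2 a ha a hb rfl⟩

lemma nodes_nodup {t : PTree} (h : t.leaves.Nodup) : t.nodesList.Nodup := by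
  induction t with
  | leaf a => simp [PTree.nodesList]
  | node l r hl hr =>
    obtain ⟨h1, h2, h3⟩ := nodup_node h
    have pl := leaves_pos l
    have pr := leaves_pos r
    have nl : PTree.node l r ∉ l.nodesList := fun hh => by
      have := nodes_len hh; simp [PTree.leaves] at this; exact leaves_ne r this
    have nr : PTree.node l r ∉ r.nodesList := fun hh => by
      have := nodes_len hh; simp [PTree.leaves] at this; exact leaves_ne l this
    have nlr : ∀ v ∈ l.nodesList, v ∉ r.nodesList := fun v hv hv' => by
      obtain ⟨a, ha⟩ := exists_leaf v
      exact h3 a (nodes_sub hv a ha) (nodes_sub hv' a ha)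
    simp only [PTree.nodesList]
    rw [List.nodup_append]
    refine ⟨hl h1, List.nodup_cons.2 ⟨nr, hr h2⟩, ?_⟩
    rintro a ha b hb rfl
    rcases List.mem_cons.1 hb with rfl | hb
    · exact nl ha
    · exact nlr _ ha hb

lemma nadir_mem {t : PTree} {i j : ℕ} {w : PTree × Bool} (h : t.nadir i j = some w) :
    w.1 ∈ t.nodesList := by
  induction t with
  | leaf a => simp [PTree.nadir] at h
  | node l r hl hr =>
    simp only [PTree.nadir] at h
    simp only [PTree.nodesList, List.mem_append, List.mem_cons]
    split_ifs at h
    · simp at h; simp [← h]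
    · simp at h; simp [← h]
    · exact Or.inl (hl h)
    · exact Or.inr (Or.inr (hr h))

def osg : Option (PTree × Bool) → PTree → ℤ
  | none, _ => 0
  | some (w, b), v => if w = v then (if b then -1 else 1) else 0

lemma cv_zero {v : PTree} {e : ℕ × ℕ} (h : ¬ (e.1 ∈ v.leaves ∧ e.2 ∈ v.leaves)) : cv v e = 0 := by
  cases v with
  | leaf a => rfl
  | node l r =>
    simp only [PTree.leaves, List.mem_append] at h
    simp only [cv]
    rw [if_neg (by tauto), if_neg (by tauto)]; rfl

lemma nadir_none {t : PTree} {i j : ℕ} (h : ¬ (i ∈ t.leaves ∧ j ∈ t.leaves)) : 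
    t.nadir i j = none := by
  cases t with
  | leaf a => rfl
  | node l r =>
    simp only [PTree.leaves, List.mem_append] at h
    simp only [PTree.nadir]
    rw [if_neg (by tauto), if_neg (by tauto), if_neg (by tauto), if_neg (by tauto)]

lemma osg_notin {t v : PTree} {i j : ℕ} (h : v ∉ t.nodesList) : osg (t.nadir i j) v = 0 := by
  cases hn : t.nadir i j with
  | none => rfl
  | some w =>
    obtain ⟨w, b⟩ := w
    have := nadir_mem hn
    simp only [osg]
    rw [if_neg]; rintro rfl; exact h this

lemma cv_eq_osg {t : PTree} (ht : t.leaves.Nodup) (i j : ℕ) :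
    ∀ v ∈ t.nodesList, cv v (i, j) = osg (t.nadir i j) v := by
  induction t with
  | leaf a => simp [PTree.nodesList]
  | node l r hl hr =>
    obtain ⟨h1, h2, h3⟩ := nodup_node ht
    have hn := nodes_nodup ht
    simp only [PTree.nodesList, List.nodup_append, List.nodup_cons] at hn
    obtain ⟨n1, ⟨n2, n3⟩, n4⟩ := hn
    have nl : PTree.node l r ∉ l.nodesList := fun hh => n4 _ hh _ (by simp) rfl
    intro v hv
    simp only [PTree.nodesList, List.mem_append, List.mem_cons] at hv
    have a1 := h3 i
    have a2 := h3 j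
    rcases hv with hv | rfl | hv
    · have hne : PTree.node l r ≠ v := by rintro rfl; exact nl hv
      have hvr : v ∉ r.nodesList := fun h => n4 v hv v (by simp [h]) rfl
      by_cases hij : i ∈ l.leaves ∧ j ∈ l.leaves
      · rw [hl h1 v hv]
        simp only [PTree.nadir]
        rw [if_neg (by tauto), if_neg (by tauto), if_pos hij]
      · rw [cv_zero (fun h => hij ⟨nodes_sub hv _ h.1, nodes_sub hv _ h.2⟩)]
        simp only [PTree.nadir]
        split_ifs
        · simp [osg, hne]
        · simp [osg, hne]
        · exact (osg_notin hvr).symm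
        · rfl
    · simp only [cv, PTree.nadir]
      by_cases p1 : i ∈ l.leaves ∧ j ∈ r.leaves
      · rw [if_pos p1, if_pos p1, if_neg (by tauto)]; simp [osg]
      · by_cases p2 : j ∈ l.leaves ∧ i ∈ r.leaves
        · rw [if_neg p1, if_neg p1, if_pos p2, if_pos (by tauto)]; simp [osg]
        · rw [if_neg p1, if_neg p1, if_neg p2, if_neg (by tauto)]
          split_ifs
          · exact (osg_notin nl).symm
          · exact (osg_notin n2).symm
          · rfl
    · have hne : PTree.node l r ≠ v := by rintro rfl; exact n2 hv
      have hvr : v ∉ l.nodesList := fun h => n4 v h v (by simp [hv]) rfl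
      by_cases hij : i ∈ r.leaves ∧ j ∈ r.leaves
      · rw [hr h2 v hv]
        simp only [PTree.nadir]
        rw [if_neg (by tauto), if_neg (by tauto), if_neg (by tauto), if_pos hij]
      · rw [cv_zero (fun h => hij ⟨nodes_sub hv _ h.1, nodes_sub hv _ h.2⟩)]
        simp only [PTree.nadir]
        split_ifs
        · simp [osg, hne]
        · simp [osg, hne]
        · exact (osg_notin hvr).symm
        · rfl

/-- multilinear polynomials -/
def ML (P : MP) : Prop := ∀ e, pderiv e (pderiv e P) = 0

lemma pderiv_comm (e e' : ℕ × ℕ) (P : MP) :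
    pderiv e (pderiv e' P) = pderiv e' (pderiv e P) := by
  have : ⁅pderiv (R := ℤ) e, pderiv (R := ℤ) e'⁆ = 0 := by
    apply MvPolynomial.derivation_ext
    intro i
    rw [Derivation.commutator_apply]
    simp [pderiv_X, Pi.single_apply, apply_ite]
  have h := congrArg (fun d : Derivation ℤ MP MP => d P) this
  simp only [Derivation.commutator_apply, Derivation.zero_apply] at h
  exact sub_eq_zero.1 h

lemma ML.pd {P : MP} (h : ML P) (e : ℕ × ℕ) : ML (pderiv e P) := fun e' => by
  rw [pderiv_comm e' e, pderiv_comm e' e, h e', map_zero]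

lemma coeff_pd (P : MP) (e : ℕ × ℕ) (m : ℕ × ℕ →₀ ℕ) :
    coeff m (pderiv e P) = coeff (m + Finsupp.single e 1) P * (m e + 1) := by
  induction P using MvPolynomial.induction_on' with
  | monomial u a =>
    rw [pderiv_monomial, coeff_monomial, coeff_monomial]
    by_cases h : u = m + Finsupp.single e 1
    · subst h; simp
    · rw [if_neg h, zero_mul]
      split_ifs with h2
      · by_cases hu : u e = 0
        · simp [hu]
        · exfalso; apply h; rw [← h2]
          ext x; by_cases hx : x = e
          · subst hx; simp; omega
          · simp [Ne.symm hx]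
      · rfl
  | add p q hp hq => simp [hp, hq, add_mul]

lemma coeff_two {P : MP} (h : ML P) (e : ℕ × ℕ) (m : ℕ × ℕ →₀ ℕ) :
    coeff (m + Finsupp.single e 1 + Finsupp.single e 1) P = 0 := by
  have h1 : coeff m (pderiv e (pderiv e P)) = 0 := by rw [h e]; simp
  rw [coeff_pd, coeff_pd] at h1
  simp only [mul_eq_zero] at h1
  rcases h1 with (h1 | h1) | h1
  · exact h1
  · exfalso; have : (0:ℤ) ≤ (((m + Finsupp.single e 1 : ℕ × ℕ →₀ ℕ) e : ℕ) : ℤ) := by positivity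
    omega
  · exfalso; have : (0:ℤ) ≤ (m e : ℕ) := by positivity
    omega

lemma ML.coeff_cons {P : MP} (h : ML P) (e : ℕ × ℕ) (E : Multiset (ℕ × ℕ)) :
    coeff (Multiset.toFinsupp (e ::ₘ E)) P = coeff (Multiset.toFinsupp E) (pderiv e P) := by
  rw [coeff_pd]
  have : Multiset.toFinsupp (e ::ₘ E) = Multiset.toFinsupp E + Finsupp.single e 1 := by
    rw [← Multiset.singleton_add, map_add, Multiset.toFinsupp_singleton, add_comm]
  rw [this]
  by_cases he : Multiset.toFinsupp E e = 0
  · simp [he]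
  · have h2 : coeff (Multiset.toFinsupp E + Finsupp.single e 1) P = 0 := by
      have := coeff_two h e (Multiset.toFinsupp E - Finsupp.single e 1)
      rwa [tsub_add_cancel_of_le] at this
      rw [Finsupp.single_le_iff]; omega
    rw [h2, zero_mul]

lemma pd_prod_zero (e : ℕ × ℕ) (L : Multiset PTree) (h : ∀ v ∈ L, cv v e = 0) :
    pderiv e (L.map ell).prod = 0 := by
  induction L using Multiset.induction with
  | empty => simp
  | cons a L ih =>
    rw [Multiset.map_cons, Multiset.prod_cons, Derivation.leibniz, ih (fun v hv => h v (by simp [hv])),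
      pderiv_ell, h a (by simp)]
    simp

lemma pd_prod {t : PTree} (ht : t.leaves.Nodup) (e : ℕ × ℕ) (L : Multiset PTree) (hL : L.Nodup)
    (h : ∀ v ∈ L, v ∈ t.nodesList) :
    (∀ w b, t.nadir e.1 e.2 = some (w, b) → w ∈ L →
      pderiv e (L.map ell).prod = C (if b then -1 else 1) * ((L.erase w).map ell).prod) ∧
    ((∀ w b, t.nadir e.1 e.2 = some (w, b) → w ∉ L) → pderiv e (L.map ell).prod = 0) := by
  constructor
  · intro w b hn hw
    obtain ⟨L', rfl⟩ := Multiset.exists_cons_of_mem hw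
    have hc : ∀ v ∈ w ::ₘ L', cv v e = osg (some (w, b)) v := fun v hv => by
      rw [← hn]; exact cv_eq_osg ht e.1 e.2 v (h v hv)
    rw [Multiset.map_cons, Multiset.prod_cons, Derivation.leibniz, pd_prod_zero, pderiv_ell,
      hc w (by simp)]
    · simp [osg, mul_comm]
    · intro v hv
      rw [hc v (by simp [hv])]
      have : w ≠ v := by rintro rfl; exact (Multiset.nodup_cons.1 hL).1 hv
      simp [osg, this]
  · intro hn
    apply pd_prod_zero
    intro v hv
    rw [show e = (e.1, e.2) from rfl, cv_eq_osg ht e.1 e.2 v (h v hv)]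
    cases hh : t.nadir e.1 e.2 with
    | none => rfl
    | some w =>
      obtain ⟨w, b⟩ := w
      have : w ≠ v := by rintro rfl; exact hn _ _ hh hv
      simp [osg, this]

lemma prod_ML {t : PTree} (ht : t.leaves.Nodup) (L : Multiset PTree) (hL : L.Nodup)
    (h : ∀ v ∈ L, v ∈ t.nodesList) : ML (L.map ell).prod := by
  intro e
  by_cases hn : ∃ w b, t.nadir e.1 e.2 = some (w, b) ∧ w ∈ L
  · obtain ⟨w, b, h1, h2⟩ := hn
    rw [(pd_prod ht e L hL h).1 w b h1 h2, Derivation.leibniz, 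
      (pd_prod ht e (L.erase w) (hL.erase w) (fun v hv => h v (Multiset.mem_of_mem_erase hv))).2]
    · rw [pderiv_C]; simp
    · intro w' b' h'
      rw [h1] at h'
      simp only [Option.some.injEq, Prod.mk.injEq] at h'
      rw [← h'.1]
      exact hL.notMem_erase
  · push Not at hn
    rw [(pd_prod ht e L hL h).2 hn, map_zero]

lemma coeff_prod {t : PTree} (ht : t.leaves.Nodup) (E : Multiset (ℕ × ℕ)) :
    ∀ (L : Multiset PTree) (_ : L.Nodup) (_ : ∀ v ∈ L, v ∈ t.nodesList),
    coeff (Multiset.toFinsupp E) (L.map ell).prod =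
      if E.map (nadirFst t) = L.map some
      then (-1) ^ (Multiset.card (E.filter (fun e => (t.nadir e.1 e.2).map Prod.snd = some true)))
      else 0 := by
  induction E using Multiset.induction with
  | empty =>
    intro L hL h
    rw [Multiset.toFinsupp_zero, ← constantCoeff_eq]
    rcases Multiset.empty_or_exists_mem L with rfl | ⟨v, hv⟩
    · simp
    · obtain ⟨L', rfl⟩ := Multiset.exists_cons_of_mem hv
      rw [if_neg (by simp)]
      simp [coeff_zero_ell]
  | cons e E ih =>
    intro L hL h
    rw [(prod_ML ht L hL h).coeff_cons]
    by_cases hn : ∃ w b, t.nadir e.1 e.2 = some (w, b) ∧ w ∈ L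
    · obtain ⟨w, b, h1, h2⟩ := hn
      rw [(pd_prod ht e L hL h).1 w b h1 h2, coeff_C_mul,
        ih _ (hL.erase w) (fun v hv => h v (Multiset.mem_of_mem_erase hv))]
      obtain ⟨L', rfl⟩ := Multiset.exists_cons_of_mem h2
      have hw : nadirFst t e = some w := by simp [nadirFst, h1]
      rw [Multiset.erase_cons_head, Multiset.map_cons, Multiset.map_cons, hw]
      simp only [Multiset.cons_inj_right]
      by_cases hE : E.map (nadirFst t) = L'.map some
      · simp only [hE, if_true]
        cases b
        · rw [Multiset.filter_cons_of_neg]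
          · simp
          · simp [h1]
        · rw [Multiset.filter_cons_of_pos]
          · simp [pow_succ]
          · simp [h1]
      · simp only [hE, if_false, mul_zero]
    · push Not at hn
      rw [(pd_prod ht e L hL h).2 hn, coeff_zero, if_neg]
      intro hE
      have : nadirFst t e ∈ L.map some := by rw [← hE]; simp
      obtain ⟨w, hw, hw'⟩ := Multiset.mem_map.1 this
      simp only [nadirFst] at hw'
      cases hh : t.nadir e.1 e.2 with
      | none => rw [hh] at hw'; simp at hw'
      | some q =>
        rw [hh] at hw'; simp at hw'
        exact hn q.1 q.2 hh (hw' ▸ hw)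

lemma tp_eq (t : PTree) : tp t = (((t.nodesList : Multiset PTree)).map ell).prod := by
  simp [tp]

lemma tp_ML {t : PTree} (ht : t.leaves.Nodup) : ML (tp t) := by
  rw [tp_eq]; exact prod_ML ht _ (Multiset.coe_nodup.2 (nodes_nodup ht)) (fun v hv => by simpa using hv)

lemma coeff_tp {t : PTree} (ht : t.leaves.Nodup) (E : Multiset (ℕ × ℕ)) :
    coeff (Multiset.toFinsupp E) (tp t) = pairPT E t := by
  rw [tp_eq, coeff_prod ht E _ (Multiset.coe_nodup.2 (nodes_nodup ht)) (fun v hv => by simpa using hv)]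
  rfl

end GTPairing

namespace GTPairing
open MvPolynomial

def inS (S : Set ℕ) (e : ℕ × ℕ) : Prop := e.1 ∈ S ∧ e.2 ∈ S

structure Sup (S : Set ℕ) (P : MP) : Prop where
  ml : ML P
  supp : ∀ e, ¬ inS S e → pderiv e P = 0

lemma Sup.pd {S : Set ℕ} {P : MP} (h : Sup S P) (e : ℕ × ℕ) : Sup S (pderiv e P) :=
  ⟨h.ml.pd e, fun e' he' => by rw [pderiv_comm, h.supp e' he', map_zero]⟩

lemma Sup.one (S : Set ℕ) : Sup S 1 := ⟨fun e => by simp, fun e _ => by simp⟩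

lemma Sup.mul {S S' : Set ℕ} (hd : Disjoint S S') {P Q : MP} (hP : Sup S P) (hQ : Sup S' Q) :
    Sup (S ∪ S') (P * Q) := by
  have hh : ∀ e, pderiv e P = 0 ∨ pderiv e Q = 0 := fun e => by
    by_cases h : inS S e
    · right; apply hQ.supp; intro h'
      exact Set.disjoint_left.1 hd h.1 h'.1
    · left; exact hP.supp e h
  constructor
  · intro e
    have h1 := hP.ml e
    have h2 := hQ.ml e
    rcases hh e with h | h <;> simp [Derivation.leibniz, h, h1, h2]
  · intro e he
    have h1 := hP.supp e (fun h => he ⟨Or.inl h.1, Or.inl h.2⟩)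
    have h2 := hQ.supp e (fun h => he ⟨Or.inr h.1, Or.inr h.2⟩)
    simp [Derivation.leibniz, h1, h2]

lemma coeff_mul_disj {S S' : Set ℕ} (hd : Disjoint S S') (E : Multiset (ℕ × ℕ)) :
    ∀ {P Q : MP} (_ : Sup S P) (_ : Sup S' Q),
    coeff (Multiset.toFinsupp E) (P * Q) =
      if ∀ e ∈ E, inS S e ∨ inS S' e then
        coeff (Multiset.toFinsupp (E.filter (inS S))) P *
        coeff (Multiset.toFinsupp (E.filter (inS S'))) Q
      else 0 := by
  induction E using Multiset.induction with
  | empty =>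
    intro P Q hP hQ
    simp [← constantCoeff_eq]
  | cons e E ih =>
    intro P Q hP hQ
    rw [(hP.mul hd hQ).ml.coeff_cons, Derivation.leibniz, smul_eq_mul, smul_eq_mul, coeff_add]
    by_cases h : inS S e
    · have h' : ¬ inS S' e := fun h' => Set.disjoint_left.1 hd h.1 h'.1
      rw [hQ.supp e h', mul_zero, coeff_zero, zero_add, mul_comm, ih (hP.pd e) hQ,
        Multiset.filter_cons_of_pos _ h, Multiset.filter_cons_of_neg _ h', hP.ml.coeff_cons]
      simp [h]
    · by_cases h' : inS S' e
      · rw [hP.supp e h, mul_zero, coeff_zero, add_zero, ih hP (hQ.pd e),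
          Multiset.filter_cons_of_neg _ h, Multiset.filter_cons_of_pos _ h', hQ.ml.coeff_cons]
        simp [h']
      · rw [hP.supp e h, hQ.supp e h', mul_zero, mul_zero, coeff_zero, if_neg]
        · simp
        · intro hh; rcases hh e (by simp) with q | q
          · exact h q
          · exact h' q

def lset (t : PTree) : Set ℕ := {a | a ∈ t.leaves}

lemma tp_supp (t : PTree) (e : ℕ × ℕ) (he : ¬ inS (lset t) e) : pderiv e (tp t) = 0 := by
  rw [tp_eq]
  apply pd_prod_zero
  intro v hv
  apply cv_zero
  intro h
  have hv : v ∈ t.nodesList := by simpa using hv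
  exact he ⟨nodes_sub hv _ h.1, nodes_sub hv _ h.2⟩

lemma tp_Sup {t : PTree} (ht : t.leaves.Nodup) : Sup (lset t) (tp t) := ⟨tp_ML ht, tp_supp t⟩

def fp (F : Finset PTree) : MP := ∏ t ∈ F, tp t

def fset (F : Finset PTree) : Set ℕ := {a | ∃ t ∈ F, a ∈ t.leaves}

/-- pre-forest : disjointness part -/
def PF (F : Finset PTree) : Prop :=
  (∀ t ∈ F, t.leaves.Nodup) ∧ (∀ t ∈ F, ∀ s ∈ F, t ≠ s → ∀ a ∈ t.leaves, a ∉ s.leaves)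

lemma PF_insert {t : PTree} {F : Finset PTree} (ht : t ∉ F) : PF (insert t F) ↔
    t.leaves.Nodup ∧ PF F ∧ ∀ s ∈ F, ∀ a ∈ t.leaves, a ∉ s.leaves := by
  simp only [PF, Finset.mem_insert, forall_eq_or_imp]
  constructor
  · rintro ⟨⟨h1, h2⟩, ⟨_, h4⟩, h5⟩
    exact ⟨h1, ⟨h2, fun a ha => (h5 a ha).2⟩, fun s hs => h4 s hs (fun h => ht (h ▸ hs))⟩
  · rintro ⟨h1, ⟨h2, h3⟩, h4⟩
    exact ⟨⟨h1, h2⟩, ⟨fun h => (h rfl).elim, fun s hs _ => h4 s hs⟩,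
      fun s hs => ⟨fun _ a ha hb => h4 s hs a hb ha, h3 s hs⟩⟩

lemma fset_insert (t : PTree) (F : Finset PTree) : fset (insert t F) = lset t ∪ fset F := by
  ext a; simp [fset, lset]

lemma fp_insert {t : PTree} {F : Finset PTree} (ht : t ∉ F) : fp (insert t F) = tp t * fp F := by
  simp [fp, Finset.prod_insert ht]

lemma PF_disj {t : PTree} {F : Finset PTree} (h : ∀ s ∈ F, ∀ a ∈ t.leaves, a ∉ s.leaves) :
    Disjoint (lset t) (fset F) := by
  rw [Set.disjoint_left]
  rintro a ha ⟨s, hs, hb⟩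
  exact h s hs a ha hb

lemma fp_Sup {F : Finset PTree} (hF : PF F) : Sup (fset F) (fp F) := by
  induction F using Finset.induction with
  | empty => simpa [fp] using Sup.one _
  | insert t F ht ih =>
    obtain ⟨h1, h2, h3⟩ := (PF_insert ht).1 hF
    rw [fp_insert ht, fset_insert]
    exact (tp_Sup h1).mul (PF_disj h3) (ih h2)

lemma coeff_fp {F : Finset PTree} (hF : PF F) (E : Multiset (ℕ × ℕ)) :
    coeff (Multiset.toFinsupp E) (fp F) =
      if ∀ e ∈ E, ∃ t ∈ F, e.1 ∈ t.leaves ∧ e.2 ∈ t.leaves then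
        ∏ t ∈ F, pairPT (edgesIn E t) t else 0 := by
  induction F using Finset.induction generalizing E with
  | empty =>
    rcases Multiset.empty_or_exists_mem E with rfl | ⟨e, he⟩
    · simp [fp]
    · rw [if_neg (by intro h; simpa using h e he)]
      obtain ⟨E', rfl⟩ := Multiset.exists_cons_of_mem he
      rw [ML.coeff_cons]
      · simp [fp]
      · intro e; simp [fp]
  | insert t F ht ih =>
    obtain ⟨h1, h2, h3⟩ := (PF_insert ht).1 hF
    rw [fp_insert ht, coeff_mul_disj (PF_disj h3) E (tp_Sup h1) (fp_Sup h2), coeff_tp h1, ih h2,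
      Finset.prod_insert ht]
    have e1 : E.filter (inS (lset t)) = edgesIn E t := by unfold edgesIn; congr
    rw [e1]
    by_cases hE : ∀ e ∈ E, ∃ s ∈ insert t F, e.1 ∈ s.leaves ∧ e.2 ∈ s.leaves
    · have hE1 : ∀ e ∈ E, inS (lset t) e ∨ inS (fset F) e := fun e he => by
        obtain ⟨s, hs, hs'⟩ := hE e he
        rcases Finset.mem_insert.1 hs with rfl | hs
        · exact Or.inl hs'
        · exact Or.inr ⟨⟨s, hs, hs'.1⟩, ⟨s, hs, hs'.2⟩⟩
      have hE2 : ∀ e ∈ E.filter (inS (fset F)), ∃ s ∈ F, e.1 ∈ s.leaves ∧ e.2 ∈ s.leaves := by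
        intro e he
        obtain ⟨he, he'⟩ := Multiset.mem_filter.1 he
        obtain ⟨s, hs, hs'⟩ := hE e he
        rcases Finset.mem_insert.1 hs with rfl | hs
        · obtain ⟨⟨u, hu, hu'⟩, _⟩ := he'
          exact (h3 u hu _ hs'.1 hu').elim
        · exact ⟨s, hs, hs'⟩
      simp only [if_pos hE, if_pos hE1, if_pos hE2]
      congr 1
      apply Finset.prod_congr rfl
      intro s hs
      congr 1
      unfold edgesIn
      rw [Multiset.filter_filter]
      apply Multiset.filter_congr
      intro e _
      constructor
      · exact fun h => h.1
      · exact fun h => ⟨h, ⟨s, hs, h.1⟩, ⟨s, hs, h.2⟩⟩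
    · rw [if_neg hE]
      split_ifs with q1 q2
      · exfalso; apply hE
        intro e he
        rcases q1 e he with h | h
        · exact ⟨t, by simp, h⟩
        · obtain ⟨s, hs, hs'⟩ := q2 e (Multiset.mem_filter.2 ⟨he, h⟩)
          exact ⟨s, by simp [hs], hs'⟩
      · simp
      · rfl

lemma conn_aux (E : Multiset (ℕ × ℕ)) (s : PTree)
    (h : ∀ v ∈ s.nodesList, ∃ e ∈ E, cv v e ≠ 0) :
    ∀ a ∈ s.leaves, ∀ b ∈ s.leaves, Relation.ReflTransGen (Adj E) a b := by
  have hsym : ∀ a b, Relation.ReflTransGen (Adj E) a b → Relation.ReflTransGen (Adj E) b a := by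
    intro a b hab
    induction hab with
    | refl => exact .refl
    | tail _ h ih => exact Relation.ReflTransGen.head (Or.symm h) ih
  induction s with
  | leaf x =>
    intro a ha b hb
    simp only [PTree.leaves, List.mem_singleton] at ha hb
    subst ha; subst hb; exact .refl
  | node l r hl hr =>
    have hl := hl (fun v hv => h v (by simp [PTree.nodesList, hv]))
    have hr := hr (fun v hv => h v (by simp [PTree.nodesList, hv]))
    obtain ⟨e, he, hc⟩ := h (.node l r) (by simp [PTree.nodesList])
    have key : ∃ x ∈ l.leaves, ∃ y ∈ r.leaves, Adj E x y := by
      by_cases p1 : e.1 ∈ r.leaves ∧ e.2 ∈ l.leaves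
      · exact ⟨e.2, p1.2, e.1, p1.1, Or.inr he⟩
      · by_cases p2 : e.1 ∈ l.leaves ∧ e.2 ∈ r.leaves
        · exact ⟨e.1, p2.1, e.2, p2.2, Or.inl he⟩
        · simp [cv, p1, p2] at hc
    obtain ⟨x, hx, y, hy, hxy⟩ := key
    have cross : ∀ a ∈ l.leaves, ∀ b ∈ r.leaves, Relation.ReflTransGen (Adj E) a b :=
      fun a ha b hb => ((hl a ha x hx).tail hxy).trans (hr y hy b hb)
    intro a ha b hb
    simp only [PTree.leaves, List.mem_append] at ha hb
    rcases ha with ha | ha <;> rcases hb with hb | hb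
    · exact hl a ha b hb
    · exact cross a ha b hb
    · exact hsym _ _ (cross b hb a ha)
    · exact hr a ha b hb

lemma pairPT_conn {t : PTree} (ht : t.leaves.Nodup) (E : Multiset (ℕ × ℕ)) (h : pairPT E t ≠ 0) :
    ConnOn t.leaves.toFinset E := by
  unfold pairPT at h
  split_ifs at h with hE
  · intro a ha b hb
    refine conn_aux E t ?_ a (by simpa using ha) b (by simpa using hb)
    intro v hv
    have : some v ∈ E.map (nadirFst t) := by rw [hE]; simpa using hv
    obtain ⟨e, he, hev⟩ := Multiset.mem_map.1 this
    refine ⟨e, he, ?_⟩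
    rw [show e = (e.1, e.2) from rfl, cv_eq_osg ht _ _ v hv]
    simp only [nadirFst] at hev
    cases hh : t.nadir e.1 e.2 with
    | none => rw [hh] at hev; simp at hev
    | some q =>
      rw [hh] at hev; simp at hev
      obtain ⟨w, b⟩ := q
      simp only at hev
      subst hev
      cases b <;> simp [osg]
  · simp at h

lemma pairDF_eq {F : Finset PTree} (hF : PF F) (E : Multiset (ℕ × ℕ)) :
    pairDF E F = coeff (Multiset.toFinsupp E) (fp F) := by
  rw [coeff_fp hF]
  unfold pairDF sameRho
  by_cases h1 : ∀ e ∈ E, ∃ t ∈ F, e.1 ∈ t.leaves ∧ e.2 ∈ t.leaves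
  · rw [if_pos h1]
    by_cases h2 : ∀ t ∈ F, ConnOn t.leaves.toFinset (edgesIn E t)
    · rw [if_pos ⟨h1, h2⟩]
    · rw [if_neg (fun h => h2 h.2)]
      push Not at h2
      obtain ⟨t, ht, hc⟩ := h2
      symm
      apply Finset.prod_eq_zero ht
      by_contra hne
      exact hc (pairPT_conn (hF.1 t ht) _ hne)
  · rw [if_neg (fun h => h1 h.1), if_neg h1]

/-- Graph-side relations at the level of polynomials -/
structure Good (P : MP) : Prop where
  symm : ∀ i j, pderiv (i, j) P = - pderiv (j, i) P
  arnold : ∀ i j k, i ≠ j → j ≠ k → i ≠ k →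
    pderiv (i, j) (pderiv (j, k) P) + pderiv (j, k) (pderiv (k, i) P)
      + pderiv (k, i) (pderiv (i, j) P) = 0

lemma Good.one : Good 1 := ⟨fun i j => by simp, fun i j k _ _ _ => by simp⟩

lemma Good.mul {S S' : Set ℕ} (hd : Disjoint S S') {P Q : MP} (hP : Sup S P) (hQ : Sup S' Q)
    (gP : Good P) (gQ : Good Q) : Good (P * Q) := by
  constructor
  · intro i j
    simp only [Derivation.leibniz, smul_eq_mul]
    rw [gP.symm i j, gQ.symm i j]; ring
  · intro i j k h1 h2 h3
    have hz : ∀ a b c, pderiv (a, b) P * pderiv (b, c) Q = 0 := fun a b c => by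
      by_cases h : inS S (a, b)
      · rw [hQ.supp (b, c), mul_zero]
        intro h'; exact Set.disjoint_left.1 hd h.2 h'.1
      · rw [hP.supp _ h, zero_mul]
    have hz' : ∀ a b c, pderiv (b, c) P * pderiv (a, b) Q = 0 := fun a b c => by
      by_cases h : inS S (b, c)
      · rw [hQ.supp (a, b), mul_zero]
        intro h'; exact Set.disjoint_left.1 hd h.1 h'.2
      · rw [hP.supp _ h, zero_mul]
    have a1 := gP.arnold i j k h1 h2 h3
    have a2 := gQ.arnold i j k h1 h2 h3
    simp only [Derivation.leibniz, smul_eq_mul, map_add]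
    linear_combination P * a2 + Q * a1 + hz i j k + hz j k i + hz k i j + hz' i j k + hz' j k i
      + hz' k i j

lemma tp_Good {t : PTree} (ht : t.leaves.Nodup) : Good (tp t) := by
  induction t with
  | leaf a => rw [tp_leaf]; exact Good.one
  | node l r hl hr =>
    obtain ⟨h1, h2, h3⟩ := nodup_node ht
    have hd : Disjoint (lset l) (lset r) := Set.disjoint_left.2 h3
    have gQ := Good.mul hd (tp_Sup h1) (tp_Sup h2) (hl h1) (hr h2)
    rw [tp_node]
    set Q := tp l * tp r with hQ
    have cs : ∀ i j, cv (.node l r) (i, j) = - cv (.node l r) (j, i) := fun i j => by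
      simp only [cv, and_comm]; ring
    have key : ∀ i j k, pderiv (i, j) Q *
        (C (cv (.node l r) (j, k)) + C (cv (.node l r) (k, i))) = 0 := by
      intro i j k
      by_cases c1 : inS (lset l) (i, j)
      · have e1 : i ∈ l.leaves := c1.1
        have e2 : j ∈ l.leaves := c1.2
        have e3 := h3 i e1
        have e4 := h3 j e2
        rw [← C_add]
        simp [cv, e1, e2, e3, e4]
      · by_cases c2 : inS (lset r) (i, j)
        · have e1 : i ∈ r.leaves := c2.1
          have e2 : j ∈ r.leaves := c2.2
          have e3 : i ∉ l.leaves := fun h => h3 i h e1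
          have e4 : j ∉ l.leaves := fun h => h3 j h e2
          rw [← C_add]
          simp [cv, e1, e2, e3, e4]
        · rw [hQ, Derivation.leibniz, tp_supp l _ c1, tp_supp r _ c2]; simp
    constructor
    · intro i j
      simp only [Derivation.leibniz, smul_eq_mul, pderiv_ell]
      rw [gQ.symm i j, cs i j, C_neg]; ring
    · intro i j k n1 n2 n3
      have a1 := gQ.arnold i j k n1 n2 n3
      simp only [Derivation.leibniz, smul_eq_mul, pderiv_ell, map_add, pderiv_C]
      linear_combination ell (.node l r) * a1 + key i j k + key j k i + key k i j

lemma fp_Good {F : Finset PTree} (hF : PF F) : Good (fp F) := by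
  induction F using Finset.induction with
  | empty => simpa [fp] using Good.one
  | insert t F ht ih =>
    obtain ⟨h1, h2, h3⟩ := (PF_insert ht).1 hF
    rw [fp_insert ht]
    exact Good.mul (PF_disj h3) (tp_Sup h1) (fp_Sup h2) (tp_Good h1) (ih h2)

/-! Graph-side relations for the pairing. -/

lemma pair_symm {F : Finset PTree} (hF : PF F) (i j : ℕ) (E : Multiset (ℕ × ℕ)) :
    pairDF ((i, j) ::ₘ E) F + pairDF ((j, i) ::ₘ E) F = 0 := by
  rw [pairDF_eq hF, pairDF_eq hF, (fp_Sup hF).ml.coeff_cons, (fp_Sup hF).ml.coeff_cons,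
    (fp_Good hF).symm i j]; simp

lemma pair_cons2 {F : Finset PTree} (hF : PF F) (e e' : ℕ × ℕ) (E : Multiset (ℕ × ℕ)) :
    pairDF (e ::ₘ e' ::ₘ E) F = coeff (Multiset.toFinsupp E) (pderiv e (pderiv e' (fp F))) := by
  rw [pairDF_eq hF, (fp_Sup hF).ml.coeff_cons, ((fp_Sup hF).ml.pd e).coeff_cons, pderiv_comm]

lemma pair_arnold {F : Finset PTree} (hF : PF F) (i j k : ℕ) (h1 : i ≠ j) (h2 : j ≠ k) (h3 : i ≠ k)
    (E : Multiset (ℕ × ℕ)) :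
    pairDF ((i, j) ::ₘ (j, k) ::ₘ E) F + pairDF ((j, k) ::ₘ (k, i) ::ₘ E) F
      + pairDF ((k, i) ::ₘ (i, j) ::ₘ E) F = 0 := by
  rw [pair_cons2 hF, pair_cons2 hF, pair_cons2 hF, ← coeff_add, ← coeff_add,
    (fp_Good hF).arnold i j k h1 h2 h3, coeff_zero]

lemma pair_doubled {F : Finset PTree} (hF : PF F) (i j : ℕ) (E : Multiset (ℕ × ℕ)) :
    pairDF ((i, j) ::ₘ (i, j) ::ₘ E) F = 0 ∧ pairDF ((i, j) ::ₘ (j, i) ::ₘ E) F = 0 := by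
  rw [pair_cons2 hF, pair_cons2 hF, (fp_Good hF).symm j i, map_neg, (fp_Sup hF).ml]; simp

lemma fp_homog (F : Finset PTree) : (fp F).IsHomogeneous (forestDeg F) :=
  IsHomogeneous.prod _ _ _ fun t _ => tp_homog t

lemma pair_deg {F : Finset PTree} (hF : PF F) (E : Multiset (ℕ × ℕ)) (h : pairDF E F ≠ 0) :
    Multiset.card E = forestDeg F := by
  rw [pairDF_eq hF] at h
  have := (fp_homog F).coeff_eq_zero (d := Multiset.toFinsupp E)
  by_contra hne
  apply h
  apply this
  intro h2
  apply hne
  rw [← h2, ← Multiset.toFinsupp_sum_eq]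
  rfl

end GTPairing

namespace GTPairing
open MvPolynomial

/-- One-hole contexts of planar trees. -/
inductive Ctx : Type
  | hole : Ctx
  | left (c : Ctx) (r : PTree) : Ctx
  | right (l : PTree) (c : Ctx) : Ctx

namespace Ctx

def fill : Ctx → PTree → PTree
  | hole, s => s
  | left c r, s => .node (c.fill s) r
  | right l c, s => .node l (c.fill s)

def out : Ctx → List ℕ
  | hole => []
  | left c r => c.out ++ r.leaves
  | right l c => l.leaves ++ c.out

def comp : Ctx → Ctx → Ctx
  | hole, d => d
  | left c r, d => left (c.comp d) r
  | right l c, d => right l (c.comp d)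

def cmap (f : PTree → PTree) : Ctx → Ctx
  | hole => hole
  | left c r => left (c.cmap f) (f r)
  | right l c => right (f l) (c.cmap f)

lemma fill_comp (c d : Ctx) (s : PTree) : (c.comp d).fill s = c.fill (d.fill s) := by
  induction c with
  | hole => rfl
  | left c r ih => simp [comp, fill, ih]
  | right l c ih => simp [comp, fill, ih]

lemma leaves_fill (c : Ctx) (s : PTree) : (c.fill s).leaves.Perm (s.leaves ++ c.out) := by
  induction c with
  | hole => simp [fill, out]
  | left c r ih =>
    simp only [fill, out, PTree.leaves]
    rw [← List.append_assoc]
    exact ih.append_right _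
  | right l c ih =>
    simp only [fill, out, PTree.leaves]
    refine (ih.append_left _).trans ?_
    rw [← List.append_assoc, ← List.append_assoc]
    exact List.perm_append_comm.append_right _

lemma fill_perm (c : Ctx) {s s' : PTree} (h : s.leaves.Perm s'.leaves) :
    (c.fill s).leaves.Perm (c.fill s').leaves :=
  (c.leaves_fill s).trans ((h.append_right _).trans (c.leaves_fill s').symm)

lemma mem_fill (c : Ctx) (s : PTree) (a : ℕ) : a ∈ (c.fill s).leaves ↔ a ∈ s.leaves ∨ a ∈ c.out := by
  rw [(c.leaves_fill s).mem_iff, List.mem_append]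

end Ctx

lemma graft_notmem {t : PTree} {m : ℕ} (h : m ∉ t.leaves) (s : PTree) : t.graft m s = t := by
  induction t with
  | leaf a => simp [PTree.leaves] at h; simp [PTree.graft, Ne.symm h]
  | node l r hl hr =>
    simp only [PTree.leaves, List.mem_append, not_or] at h
    simp [PTree.graft, hl h.1, hr h.2]

lemma graft_ctx {D : PTree} {m : ℕ} (hD : D.leaves.Nodup) (hm : m ∈ D.leaves) :
    ∃ c : Ctx, ∀ s, D.graft m s = c.fill s := by
  induction D with
  | leaf a =>
    simp [PTree.leaves] at hm
    exact ⟨.hole, fun s => by simp [PTree.graft, hm, Ctx.fill]⟩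
  | node l r hl hr =>
    obtain ⟨h1, h2, h3⟩ := nodup_node hD
    simp only [PTree.leaves, List.mem_append] at hm
    rcases hm with hm | hm
    · obtain ⟨c, hc⟩ := hl h1 hm
      exact ⟨.left c r, fun s => by simp [PTree.graft, hc, Ctx.fill, graft_notmem (h3 m hm)]⟩
    · obtain ⟨c, hc⟩ := hr h2 hm
      exact ⟨.right l c, fun s => by
        simp [PTree.graft, hc, Ctx.fill, graft_notmem (fun h => h3 m h hm)]⟩

lemma fill_graft (c : Ctx) {m : ℕ} (hm : m ∉ c.out) (u s : PTree) :
    (c.fill u).graft m s = c.fill (u.graft m s) := by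
  induction c with
  | hole => rfl
  | left c r ih =>
    simp only [Ctx.out, List.mem_append, not_or] at hm
    simp [Ctx.fill, PTree.graft, ih hm.1, graft_notmem hm.2]
  | right l c ih =>
    simp only [Ctx.out, List.mem_append, not_or] at hm
    simp [Ctx.fill, PTree.graft, ih hm.2, graft_notmem hm.1]

lemma ctx_graft (c : Ctx) {s : PTree} (h : (c.fill s).leaves.Nodup) :
    ∃ (D : PTree) (m : ℕ), D.leaves.Nodup ∧ m ∈ D.leaves ∧ ∀ s', D.graft m s' = c.fill s' := by
  obtain ⟨m, hm⟩ := exists_leaf s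
  have h' := (c.leaves_fill s).nodup_iff.1 h
  rw [List.nodup_append] at h'
  have hmc : m ∉ c.out := fun hc => h'.2.2 m hm m hc rfl
  refine ⟨c.fill (.leaf m), m, ?_, ?_, ?_⟩
  · rw [(c.leaves_fill _).nodup_iff]
    simp [PTree.leaves, hmc, h'.2.1]
  · rw [c.mem_fill]; simp [PTree.leaves]
  · intro s'
    rw [fill_graft c hmc]; simp [PTree.graft]

lemma ell_congr {l r l' r' : PTree} (h1 : l.leaves.Perm l'.leaves) (h2 : r.leaves.Perm r'.leaves) :
    ell (.node l r) = ell (.node l' r') := by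
  simp only [ell]
  rw [List.toFinset_eq_of_perm _ _ h1, List.toFinset_eq_of_perm _ _ h2]

lemma tp_fill (c : Ctx) (s₀ : PTree) :
    ∃ K : MP, ∀ s, s.leaves.Perm s₀.leaves → tp (c.fill s) = tp s * K := by
  induction c with
  | hole => exact ⟨1, fun s _ => by simp [Ctx.fill]⟩
  | left c r ih =>
    obtain ⟨K, hK⟩ := ih
    refine ⟨K * tp r * ell (.node (c.fill s₀) r), fun s hs => ?_⟩
    rw [Ctx.fill, tp_node, hK s hs, ell_congr (c.fill_perm hs) (List.Perm.refl _)]; ring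
  | right l c ih =>
    obtain ⟨K, hK⟩ := ih
    refine ⟨tp l * K * ell (.node l (c.fill s₀)), fun s hs => ?_⟩
    rw [Ctx.fill, tp_node, hK s hs, ell_congr (List.Perm.refl _) (c.fill_perm hs)]; ring

lemma ell_swap (l r : PTree) : ell (.node l r) = - ell (.node r l) := by
  simp only [ell]
  rw [Finset.sum_comm, ← Finset.sum_neg_distrib]
  refine Finset.sum_congr rfl fun i _ => ?_
  rw [← Finset.sum_neg_distrib]
  exact Finset.sum_congr rfl fun j _ => by ring

lemma ell_add {A B C : PTree} (h : ∀ a ∈ A.leaves, a ∉ B.leaves) :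
    ell (.node (.node A B) C) = ell (.node A C) + ell (.node B C) := by
  simp only [ell, PTree.leaves, List.toFinset_append]
  rw [Finset.sum_union]
  rw [Finset.disjoint_left]
  intro a ha hb
  exact h a (by simpa using ha) (by simpa using hb)

lemma tp_symm (A B : PTree) : tp (.node A B) + tp (.node B A) = 0 := by
  rw [tp_node, tp_node, ell_swap A B]; ring

lemma tp_jacobi {A B C : PTree} (hAB : ∀ a ∈ A.leaves, a ∉ B.leaves)
    (hBC : ∀ a ∈ B.leaves, a ∉ C.leaves) (hCA : ∀ a ∈ C.leaves, a ∉ A.leaves) :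
    tp (.node (.node A B) C) + tp (.node (.node B C) A) + tp (.node (.node C A) B) = 0 := by
  simp only [tp_node, ell_add hAB, ell_add hBC, ell_add hCA]
  rw [ell_swap B A, ell_swap C B, ell_swap A C]; ring

lemma perm_rot (A B C : PTree) : 
    (PTree.node (.node B C) A).leaves.Perm (PTree.node (.node A B) C).leaves := by
  simp only [PTree.leaves]
  rw [List.append_assoc A.leaves]
  exact List.perm_append_comm

lemma perm_swap (A B : PTree) : (PTree.node B A).leaves.Perm (PTree.node A B).leaves := by
  simp only [PTree.leaves]; exact List.perm_append_comm

lemma fill_nodup {c : Ctx} {s : PTree} (h : (c.fill s).leaves.Nodup) : s.leaves.Nodup := by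
  have h' := (c.leaves_fill s).nodup_iff.1 h
  exact (List.nodup_append.1 h').1

lemma pair_forest_symm {F₀ : Finset PTree} (c : Ctx) (A B : PTree)
    (n1 : c.fill (.node A B) ∉ F₀) (n2 : c.fill (.node B A) ∉ F₀)
    (h1 : PF (insert (c.fill (.node A B)) F₀)) (h2 : PF (insert (c.fill (.node B A)) F₀))
    (E : Multiset (ℕ × ℕ)) :
    pairDF E (insert (c.fill (.node A B)) F₀) + pairDF E (insert (c.fill (.node B A)) F₀) = 0 := by
  rw [pairDF_eq h1, pairDF_eq h2, fp_insert n1, fp_insert n2, ← coeff_add]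
  obtain ⟨K, hK⟩ := tp_fill c (.node A B)
  rw [hK _ (List.Perm.refl _), hK _ (perm_swap A B), ← add_mul, ← add_mul, tp_symm]; simp

lemma pair_forest_jacobi {F₀ : Finset PTree} (c : Ctx) (A B C : PTree)
    (n1 : c.fill (.node (.node A B) C) ∉ F₀) (n2 : c.fill (.node (.node B C) A) ∉ F₀)
    (n3 : c.fill (.node (.node C A) B) ∉ F₀)
    (h1 : PF (insert (c.fill (.node (.node A B) C)) F₀))
    (h2 : PF (insert (c.fill (.node (.node B C) A)) F₀))
    (h3 : PF (insert (c.fill (.node (.node C A) B)) F₀))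
    (E : Multiset (ℕ × ℕ)) :
    pairDF E (insert (c.fill (.node (.node A B) C)) F₀)
      + pairDF E (insert (c.fill (.node (.node B C) A)) F₀)
      + pairDF E (insert (c.fill (.node (.node C A) B)) F₀) = 0 := by
  rw [pairDF_eq h1, pairDF_eq h2, pairDF_eq h3, fp_insert n1, fp_insert n2, fp_insert n3,
    ← coeff_add, ← coeff_add]
  obtain ⟨K, hK⟩ := tp_fill c (.node (.node A B) C)
  have nd := fill_nodup ((PF_insert n1).1 h1).1
  obtain ⟨a1, a2, a3⟩ := nodup_node nd
  obtain ⟨b1, b2, b3⟩ := nodup_node a1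
  have := tp_jacobi (A := A) (B := B) (C := C) b3 (fun a ha => a3 a (by simp [PTree.leaves, ha]))
    (fun a ha hb => a3 a (by simp [PTree.leaves, hb]) ha)
  rw [hK _ (List.Perm.refl _), hK _ (perm_rot A B C),
    hK _ ((perm_rot B C A).trans (perm_rot A B C)), ← add_mul, ← add_mul, ← add_mul, ← add_mul, this]
  simp

/-! Forest condition -/

lemma isForest_iff (n : ℕ) (F : Finset PTree) : IsForestOn n F ↔ PF F ∧ fset F = Set.Iio n := by
  unfold IsForestOn PF
  constructor
  · rintro ⟨h1, h2, h3, h4⟩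
    refine ⟨⟨h1, h2⟩, ?_⟩
    ext a
    exact ⟨fun ⟨t, ht, ha⟩ => h3 t ht a ha, fun ha => h4 a ha⟩
  · rintro ⟨⟨h1, h2⟩, h3⟩
    refine ⟨h1, h2, fun t ht a ha => ?_, fun a ha => ?_⟩
    · have : a ∈ fset F := ⟨t, ht, ha⟩
      rw [h3] at this; exact this
    · have : a ∈ Set.Iio n := ha
      rw [← h3] at this; exact this

def Ins (n : ℕ) (t : PTree) (F : Finset PTree) : Prop :=
  t.leaves.Nodup ∧ PF F ∧ Disjoint (lset t) (fset F) ∧ lset t ∪ fset F = Set.Iio n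

lemma Ins.notMem {n : ℕ} {t : PTree} {F : Finset PTree} (h : Ins n t F) : t ∉ F := fun ht => by
  obtain ⟨a, ha⟩ := exists_leaf t
  exact Set.disjoint_left.1 h.2.2.1 ha ⟨t, ht, ha⟩

lemma Ins.forest {n : ℕ} {t : PTree} {F : Finset PTree} (h : Ins n t F) :
    IsForestOn n (insert t F) := by
  rw [isForest_iff, PF_insert h.notMem, fset_insert]
  exact ⟨⟨h.1, h.2.1, fun s hs a ha hb => Set.disjoint_left.1 h.2.2.1 ha ⟨s, hs, hb⟩⟩, h.2.2.2⟩

lemma Ins.of_forest {n : ℕ} {t : PTree} {F : Finset PTree} (ht : t ∉ F)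
    (h : IsForestOn n (insert t F)) : Ins n t F := by
  rw [isForest_iff, PF_insert ht, fset_insert] at h
  exact ⟨h.1.1, h.1.2.1, PF_disj h.1.2.2, h.2⟩

lemma lset_perm {t t' : PTree} (h : t.leaves.Perm t'.leaves) : lset t = lset t' := by
  ext a; exact h.mem_iff

lemma Ins.perm {n : ℕ} {t t' : PTree} {F : Finset PTree} (h : Ins n t F)
    (hp : t'.leaves.Perm t.leaves) : Ins n t' F := by
  unfold Ins
  rw [lset_perm hp, hp.nodup_iff]; exact h

variable (R : Type) [CommRing R]

def cl (n : ℕ) (F : Finset PTree) : PoisQ R n :=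
  if h : IsForestOn n F then (JsubF R n).mkQ (Finsupp.single ⟨F, h⟩ 1) else 0

lemma cl_pos {n : ℕ} {F : Finset PTree} (h : IsForestOn n F) :
    cl R n F = (JsubF R n).mkQ (Finsupp.single ⟨F, h⟩ 1) := dif_pos h

lemma cl_symm {n : ℕ} {F : Finset PTree} (c : Ctx) {A B : PTree}
    (h : Ins n (c.fill (.node A B)) F) :
    cl R n (insert (c.fill (.node A B)) F) + cl R n (insert (c.fill (.node B A)) F) = 0 := by
  have h' := h.perm (c.fill_perm (perm_swap A B))
  rw [cl_pos R h.forest, cl_pos R h'.forest, ← map_add, ← LinearMap.mem_ker, Submodule.ker_mkQ]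
  apply Submodule.subset_span
  right
  obtain ⟨D, m, d1, d2, d3⟩ := ctx_graft c h.1
  refine ⟨F, D, A, B, m, _, _, d1, d2, ?_, ?_, ?_, ?_, rfl⟩
  · rw [d3]; exact h.notMem
  · rw [d3]; exact h'.notMem
  · rw [d3]
  · rw [d3]

lemma cl_jacobi {n : ℕ} {F : Finset PTree} (c : Ctx) {A B C : PTree}
    (h : Ins n (c.fill (.node (.node A B) C)) F) :
    cl R n (insert (c.fill (.node (.node A B) C)) F) 
      + cl R n (insert (c.fill (.node (.node B C) A)) F)
      + cl R n (insert (c.fill (.node (.node C A) B)) F) = 0 := by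
  have h' := h.perm (c.fill_perm (perm_rot A B C))
  have h'' := h'.perm (c.fill_perm (perm_rot B C A))
  rw [cl_pos R h.forest, cl_pos R h'.forest, cl_pos R h''.forest, ← map_add, ← map_add,
    ← LinearMap.mem_ker, Submodule.ker_mkQ]
  apply Submodule.subset_span
  left
  obtain ⟨D, m, d1, d2, d3⟩ := ctx_graft c h.1
  refine ⟨F, D, A, B, C, m, _, _, _, d1, d2, ?_, ?_, ?_, ?_, ?_, ?_, rfl⟩
  · rw [d3]; exact h.notMem
  · rw [d3]; exact h'.notMem
  · rw [d3]; exact h''.notMem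
  · rw [d3]
  · rw [d3]
  · rw [d3]

end GTPairing

namespace GTPairing
open MvPolynomial

/-- replace the leaf `i` by the cherry `(i, n)` -/
def sub (i n : ℕ) (t : PTree) : PTree := t.graft i (.node (.leaf i) (.leaf n))

lemma sub_node (i n : ℕ) (l r : PTree) : sub i n (.node l r) = .node (sub i n l) (sub i n r) := rfl

lemma sub_fill (i n : ℕ) (c : Ctx) (s : PTree) :
    sub i n (c.fill s) = (c.cmap (sub i n)).fill (sub i n s) := by
  induction c with
  | hole => rfl
  | left c r ih => simp [Ctx.fill, Ctx.cmap, sub_node, ih]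
  | right l c ih => simp [Ctx.fill, Ctx.cmap, sub_node, ih]

lemma mem_sub (i n : ℕ) (t : PTree) (a : ℕ) :
    a ∈ (sub i n t).leaves ↔ a ∈ t.leaves ∨ (a = n ∧ i ∈ t.leaves) := by
  induction t with
  | leaf b =>
    by_cases h : b = i
    · subst h; simp [sub, PTree.graft, PTree.leaves]
    · simp [sub, PTree.graft, PTree.leaves, h, Ne.symm h]
  | node l r hl hr =>
    rw [sub_node]
    simp only [PTree.leaves, List.mem_append, hl, hr]; tauto

lemma sub_nodup {i n : ℕ} {t : PTree} (ht : t.leaves.Nodup) (hn : n ∉ t.leaves) :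
    (sub i n t).leaves.Nodup := by
  induction t with
  | leaf b =>
    simp [PTree.leaves] at hn
    by_cases h : b = i
    · subst h; simp [sub, PTree.graft, PTree.leaves, Ne.symm hn]
    · simp [sub, PTree.graft, PTree.leaves, h]
  | node l r hl hr =>
    obtain ⟨h1, h2, h3⟩ := nodup_node ht
    simp only [PTree.leaves, List.mem_append, not_or] at hn
    rw [sub_node]
    simp only [PTree.leaves]
    rw [List.nodup_append]
    refine ⟨hl h1 hn.1, hr h2 hn.2, ?_⟩
    rintro a ha b hb rfl
    rw [mem_sub] at ha hb
    rcases ha with ha | ⟨rfl, ha⟩ <;> rcases hb with hb | ⟨hb', hb⟩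
    · exact h3 a ha hb
    · subst hb'; exact hn.1 ha
    · exact hn.2 hb
    · exact h3 i ha hb

def extF (n : ℕ) : Option (Fin n) → Finset PTree → Finset PTree
  | none, F => insert (.leaf n) F
  | some i, F => F.image (sub i n)

lemma forest_lt {n : ℕ} {F : Finset PTree} (h : IsForestOn n F) {t : PTree} (ht : t ∈ F) {a : ℕ}
    (ha : a ∈ t.leaves) : a < n := h.2.2.1 t ht a ha

lemma PF_sub {n i : ℕ} {F : Finset PTree} (h : PF F) (hn : n ∉ fset F) :
    PF (F.image (sub i n)) := by
  have hn' : ∀ t ∈ F, n ∉ t.leaves := fun t ht hh => hn ⟨t, ht, hh⟩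
  constructor
  · intro t ht
    obtain ⟨s, hs, rfl⟩ := Finset.mem_image.1 ht
    exact sub_nodup (h.1 s hs) (hn' s hs)
  · intro t ht u hu htu a ha hb
    obtain ⟨s, hs, rfl⟩ := Finset.mem_image.1 ht
    obtain ⟨v, hv, rfl⟩ := Finset.mem_image.1 hu
    have hsv : s ≠ v := fun q => htu (by rw [q])
    rw [mem_sub] at ha hb
    rcases ha with ha | ⟨rfl, ha⟩ <;> rcases hb with hb | ⟨hb', hb⟩
    · exact h.2 s hs v hv hsv a ha hb
    · subst hb'; exact hn' s hs ha
    · exact hn' v hv hb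
    · exact h.2 s hs v hv hsv i ha hb

lemma ext_forest {n : ℕ} (o : Option (Fin n)) {F : Finset PTree} (h : IsForestOn n F) :
    IsForestOn (n + 1) (extF n o F) := by
  have h0 := (isForest_iff n F).1 h
  have hn : n ∉ fset F := by rw [h0.2]; simp
  cases o with
  | none =>
    apply Ins.forest
    refine ⟨by simp [PTree.leaves], h0.1, ?_, ?_⟩
    · rw [Set.disjoint_left]; intro a ha; simp [lset, PTree.leaves] at ha; subst ha; exact hn
    · rw [h0.2]; ext a; simp [lset, PTree.leaves]
  | some i =>
    rw [isForest_iff]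
    refine ⟨PF_sub h0.1 hn, ?_⟩
    have hi : (i : ℕ) ∈ fset F := by rw [h0.2]; exact i.2
    ext a
    simp only [extF, fset, Finset.mem_image, Set.mem_ofPred_eq, exists_exists_and_eq_and, mem_sub]
    constructor
    · rintro ⟨t, ht, ha | ⟨rfl, ha⟩⟩
      · have := forest_lt h ht ha; simp; omega
      · simp
    · intro ha
      have : a < n ∨ a = n := by simp at ha; omega
      rcases this with hlt | rfl
      · obtain ⟨t, ht, hta⟩ := h.2.2.2 a hlt
        exact ⟨t, ht, Or.inl hta⟩
      · obtain ⟨t, ht, hta⟩ := hi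
        exact ⟨t, ht, Or.inr ⟨rfl, hta⟩⟩

lemma Ins.ext_none {n : ℕ} {t : PTree} {F : Finset PTree} (h : Ins n t F) :
    Ins (n + 1) t (insert (.leaf n) F) := by
  have h1 := ext_forest none h.forest
  simp only [extF] at h1
  rw [Finset.insert_comm] at h1
  refine Ins.of_forest ?_ h1
  rw [Finset.mem_insert, not_or]
  refine ⟨?_, h.notMem⟩
  rintro rfl
  have := forest_lt h.forest (Finset.mem_insert_self _ _) (a := n) (by simp [PTree.leaves])
  omega

lemma Ins.ext_some {n : ℕ} {t : PTree} {F : Finset PTree} (h : Ins n t F) (i : Fin n) :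
    Ins (n + 1) (sub i n t) (F.image (sub i n)) := by
  have h1 := ext_forest (some i) h.forest
  simp only [extF] at h1
  rw [Finset.image_insert] at h1
  refine Ins.of_forest ?_ h1
  intro hh
  obtain ⟨s, hs, hst⟩ := Finset.mem_image.1 hh
  obtain ⟨a, ha⟩ := exists_leaf t
  have ha' : a ∈ (sub i n s).leaves := by rw [hst, mem_sub]; exact Or.inl ha
  rw [mem_sub] at ha'
  rcases ha' with ha' | ⟨rfl, ha'⟩
  · exact Set.disjoint_left.1 h.2.2.1 ha ⟨s, hs, ha'⟩
  · have := forest_lt h.forest (Finset.mem_insert_self _ _) ha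
    omega

variable (R : Type) [CommRing R]

def extL (n : ℕ) (o : Option (Fin n)) : PhiF R n →ₗ[R] PoisQ R (n + 1) :=
  Finsupp.linearCombination R (fun F : ForestOn n => cl R (n + 1) (extF n o F.1))

lemma extL_single (n : ℕ) (o : Option (Fin n)) (F : ForestOn n) :
    extL R n o (Finsupp.single F 1) = cl R (n + 1) (extF n o F.1) := by
  simp [extL]

lemma extL_ker (n : ℕ) (o : Option (Fin n)) : JsubF R n ≤ LinearMap.ker (extL R n o) := by
  refine Submodule.span_le.2 ?_
  rintro x (hx | hx)
  · obtain ⟨F₀, D, A, B, C, m, F₁, F₂, F₃, d1, d2, n1, n2, n3, e1, e2, e3, rfl⟩ := hx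
    obtain ⟨c, hc⟩ := graft_ctx d1 d2
    rw [hc] at n1 n2 n3 e1 e2 e3
    have hi := Ins.of_forest n1 (e1 ▸ F₁.2)
    simp only [SetLike.mem_coe, LinearMap.mem_ker, map_add, extL_single, e1, e2, e3]
    cases o with
    | none =>
      simp only [extF, Finset.insert_comm (PTree.leaf n)]
      exact cl_jacobi R c hi.ext_none
    | some i =>
      simp only [extF, Finset.image_insert, sub_fill, sub_node]
      have := hi.ext_some i
      simp only [sub_fill, sub_node] at this
      exact cl_jacobi R _ this
  · obtain ⟨F₀, D, A, B, m, F₁, F₂, d1, d2, n1, n2, e1, e2, rfl⟩ := hx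
    obtain ⟨c, hc⟩ := graft_ctx d1 d2
    rw [hc] at n1 n2 e1 e2
    have hi := Ins.of_forest n1 (e1 ▸ F₁.2)
    simp only [SetLike.mem_coe, LinearMap.mem_ker, map_add, extL_single, e1, e2]
    cases o with
    | none =>
      simp only [extF, Finset.insert_comm (PTree.leaf n)]
      exact cl_symm R c hi.ext_none
    | some i =>
      simp only [extF, Finset.image_insert, sub_fill, sub_node]
      have := hi.ext_some i
      simp only [sub_fill, sub_node] at this
      exact cl_symm R _ this

def extQ (n : ℕ) (o : Option (Fin n)) : PoisQ R n →ₗ[R] PoisQ R (n + 1) :=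
  (JsubF R n).liftQ (extL R n o) (extL_ker R n o)

lemma extQ_cl {n : ℕ} (o : Option (Fin n)) {F : Finset PTree} (h : IsForestOn n F) :
    extQ R n o (cl R n F) = cl R (n + 1) (extF n o F) := by
  rw [cl_pos R h, extQ, Submodule.mkQ_apply, Submodule.liftQ_apply]
  exact extL_single R n o ⟨F, h⟩

def WP (n : ℕ) : Submodule R (PoisQ R (n + 1)) := ⨆ o, LinearMap.range (extQ R n o)

lemma mem_WP {n : ℕ} (o : Option (Fin n)) {F : Finset PTree} (h : IsForestOn n F) :
    cl R (n + 1) (extF n o F) ∈ WP R n := by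
  rw [← extQ_cl R o h]
  exact Submodule.mem_iSup_of_mem o ⟨_, rfl⟩

lemma find_cherry {n : ℕ} {t : PTree} (h : n ∈ t.leaves) : t = .leaf n ∨
    ∃ c B, t = Ctx.fill c (.node B (.leaf n)) ∨ t = Ctx.fill c (.node (.leaf n) B) := by
  induction t with
  | leaf a => simp [PTree.leaves] at h; left; rw [h]
  | node l r hl hr =>
    right
    simp only [PTree.leaves, List.mem_append] at h
    rcases h with h | h
    · rcases hl h with rfl | ⟨c, B, rfl | rfl⟩
      · exact ⟨.hole, r, Or.inr rfl⟩
      · exact ⟨.left c r, B, Or.inl rfl⟩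
      · exact ⟨.left c r, B, Or.inr rfl⟩
    · rcases hr h with rfl | ⟨c, B, rfl | rfl⟩
      · exact ⟨.hole, l, Or.inl rfl⟩
      · exact ⟨.right l c, B, Or.inl rfl⟩
      · exact ⟨.right l c, B, Or.inr rfl⟩

lemma push_up {n : ℕ} {F : Finset PTree} (B : PTree) : ∀ (c : Ctx),
    Ins (n + 1) (c.fill (.node B (.leaf n))) F →
    cl R (n + 1) (insert (c.fill (.node B (.leaf n))) F) ∈ WP R n := by
  induction B with
  | leaf i =>
    intro c h
    have hnd := (c.leaves_fill _).nodup_iff.1 h.1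
    simp only [PTree.leaves, List.cons_append, List.nil_append, List.nodup_cons, List.mem_cons,
      not_or] at hnd
    obtain ⟨⟨hin, hic⟩, hnc, hcn⟩ := hnd
    have hi : i < n := by
      have := forest_lt h.forest (Finset.mem_insert_self _ _) (a := i)
        (by rw [c.mem_fill]; simp [PTree.leaves])
      omega
    have hiF : ∀ s ∈ F, i ∉ s.leaves := fun s hs hh =>
      Set.disjoint_left.1 h.2.2.1
        (show i ∈ lset _ from by simp only [lset, Set.mem_ofPred_eq]; rw [c.mem_fill]; simp [PTree.leaves]) ⟨s, hs, hh⟩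
    have hnF : n ∉ fset F := fun hh =>
      Set.disjoint_left.1 h.2.2.1
        (show n ∈ lset _ from by simp only [lset, Set.mem_ofPred_eq]; rw [c.mem_fill]; simp [PTree.leaves]) hh
    have hs : sub i n (c.fill (.leaf i)) = c.fill (.node (.leaf i) (.leaf n)) := by
      unfold sub
      rw [fill_graft c hic]; simp [PTree.graft]
    have hF : F.image (sub i n) = F := by
      rw [Finset.image_congr (g := id), Finset.image_id]
      intro s hs
      exact graft_notmem (hiF s hs) _
    have hI : Ins n (c.fill (.leaf i)) F := by
      have hl : lset (c.fill (.node (.leaf i) (.leaf n))) = lset (c.fill (.leaf i)) ∪ {n} := by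
        ext a; simp only [lset, Set.mem_ofPred_eq, Set.mem_union, Set.mem_singleton_iff, c.mem_fill]
        simp [PTree.leaves]; tauto
      have hnl : n ∉ lset (c.fill (.leaf i)) := by
        simp only [lset, Set.mem_ofPred_eq, c.mem_fill]
        simp [PTree.leaves, hnc, Ne.symm hin]
      refine ⟨?_, h.2.1, ?_, ?_⟩
      · rw [(c.leaves_fill _).nodup_iff]
        simp [PTree.leaves, hic, hcn]
      · refine Disjoint.mono_left ?_ h.2.2.1
        rw [hl]; exact Set.subset_union_left
      · have := h.2.2.2
        rw [hl] at this
        ext a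
        have ha := Set.ext_iff.1 this a
        simp only [Set.mem_union, Set.mem_singleton_iff, Set.mem_Iio] at ha ⊢
        by_cases han : a = n
        · subst han; simp [hnl, hnF]
        · constructor
          · intro q; have := ha.1 (by tauto); omega
          · intro q; have := ha.2 (by omega); tauto
    have := mem_WP R (some ⟨i, hi⟩) hI.forest
    simp only [extF, Finset.image_insert, hF, hs] at this
    exact this
  | node B1 B2 h1 h2 =>
    intro c h
    have hj := cl_jacobi R c h
    have hI2 := h.perm (c.fill_perm (perm_rot B1 B2 (.leaf n)))
    have hI3 := hI2.perm (c.fill_perm (perm_rot B2 (.leaf n) B1))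
    have m2 : cl R (n + 1) (insert (c.fill (.node (.node B2 (.leaf n)) B1)) F) ∈ WP R n := by
      have := h2 (c.comp (.left .hole B1))
      rw [Ctx.fill_comp] at this
      exact this hI2
    have m3 : cl R (n + 1) (insert (c.fill (.node (.node (.leaf n) B1) B2)) F) ∈ WP R n := by
      have e := h1 (c.comp (.left .hole B2))
      rw [Ctx.fill_comp] at e
      simp only [Ctx.fill] at e
      have s := cl_symm R (c.comp (.left .hole B2)) (A := .leaf n) (B := B1) (F := F) (n := n + 1)
      rw [Ctx.fill_comp, Ctx.fill_comp] at s
      have s := s hI3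
      simp only [Ctx.fill] at s
      rw [eq_neg_of_add_eq_zero_left s]
      apply Submodule.neg_mem
      apply e
      refine hI3.perm ?_
      refine c.fill_perm ?_
      simp only [PTree.leaves]
      exact List.perm_append_comm.append_right _
    rw [add_assoc] at hj
    rw [eq_neg_of_add_eq_zero_left hj]
    exact Submodule.neg_mem _ (Submodule.add_mem _ m2 m3)

lemma cl_mem_WP {n : ℕ} {F : Finset PTree} (h : IsForestOn (n + 1) F) :
    cl R (n + 1) F ∈ WP R n := by
  obtain ⟨t, ht, hn⟩ := h.2.2.2 n (by omega)
  obtain ⟨F₀, hF₀, rfl⟩ : ∃ F₀, t ∉ F₀ ∧ insert t F₀ = F :=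
    ⟨F.erase t, Finset.notMem_erase _ _, Finset.insert_erase ht⟩
  have hI := Ins.of_forest hF₀ h
  rcases find_cherry hn with rfl | ⟨c, B, rfl | rfl⟩
  · have : IsForestOn n F₀ := by
      rw [isForest_iff]
      refine ⟨hI.2.1, ?_⟩
      ext a
      have h1 := hI.2.2.1
      have ha := Set.ext_iff.1 hI.2.2.2 a
      simp [lset, PTree.leaves] at h1 ha ⊢
      by_cases q : a = n
      · subst q; simp [h1]
      · constructor
        · intro hh; have := ha.1 (Or.inr hh); omega
        · intro hh; rcases ha.2 (by omega) with r | r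
          · exact (q r).elim
          · exact r
    exact mem_WP R none this
  · exact push_up R B c hI
  · have s := cl_symm R c hI
    rw [eq_neg_of_add_eq_zero_left s]
    exact Submodule.neg_mem _ (push_up R B c (hI.perm (c.fill_perm (perm_swap _ _))))

lemma span_cl (n : ℕ) : Submodule.span R {x | ∃ F, IsForestOn n F ∧ x = cl R n F} = ⊤ := by
  rw [eq_top_iff]
  rintro x -
  obtain ⟨y, rfl⟩ := (JsubF R n).mkQ_surjective x
  induction y using Finsupp.induction_linear with
  | zero => simp
  | add f g hf hg => rw [map_add]; exact Submodule.add_mem _ hf hg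
  | single F a =>
    rw [← mul_one a, ← smul_eq_mul, ← Finsupp.smul_single, map_smul]
    apply Submodule.smul_mem
    apply Submodule.subset_span
    exact ⟨F.1, F.2, (cl_pos R F.2).symm⟩

lemma WP_top (n : ℕ) : WP R n = ⊤ := by
  rw [eq_top_iff, ← span_cl, Submodule.span_le]
  rintro x ⟨F, hF, rfl⟩
  exact cl_mem_WP R hF

/-! Diagrams -/

def cld (n : ℕ) (E : Multiset (ℕ × ℕ)) : SiopQ R n :=
  if h : IsDiagOn n E then (IsubD R n).mkQ (Finsupp.single ⟨E, h⟩ 1) else 0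

lemma cld_pos {n : ℕ} {E : Multiset (ℕ × ℕ)} (h : IsDiagOn n E) :
    cld R n E = (IsubD R n).mkQ (Finsupp.single ⟨E, h⟩ 1) := dif_pos h

lemma diag_cons {n : ℕ} {e : ℕ × ℕ} {E : Multiset (ℕ × ℕ)} :
    IsDiagOn n (e ::ₘ E) ↔ (e.1 < n ∧ e.2 < n ∧ e.1 ≠ e.2) ∧ IsDiagOn n E := by
  simp [IsDiagOn]

lemma diag_swap {n i j : ℕ} {E : Multiset (ℕ × ℕ)} (h : IsDiagOn n ((i, j) ::ₘ E)) :
    IsDiagOn n ((j, i) ::ₘ E) := by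
  rw [diag_cons] at h ⊢
  exact ⟨⟨h.1.2.1, h.1.1, h.1.2.2.symm⟩, h.2⟩

lemma cld_symm {n i j : ℕ} {E : Multiset (ℕ × ℕ)} (h : IsDiagOn n ((i, j) ::ₘ E)) :
    cld R n ((i, j) ::ₘ E) + cld R n ((j, i) ::ₘ E) = 0 := by
  rw [cld_pos R h, cld_pos R (diag_swap h), ← map_add, ← LinearMap.mem_ker, Submodule.ker_mkQ]
  apply Submodule.subset_span
  left; right
  exact ⟨i, j, E, _, _, rfl, rfl, rfl⟩

lemma cld_doubled {n i j : ℕ} {E : Multiset (ℕ × ℕ)} 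
    (h : IsDiagOn n ((i, j) ::ₘ (i, j) ::ₘ E)) :
    cld R n ((i, j) ::ₘ (i, j) ::ₘ E) = 0 := by
  rw [cld_pos R h, ← LinearMap.mem_ker, Submodule.ker_mkQ]
  apply Submodule.subset_span
  right
  exact ⟨i, j, E, _, Or.inl rfl, rfl⟩

lemma cld_doubled' {n i j : ℕ} {E : Multiset (ℕ × ℕ)} 
    (h : IsDiagOn n ((i, j) ::ₘ (j, i) ::ₘ E)) :
    cld R n ((i, j) ::ₘ (j, i) ::ₘ E) = 0 := by
  rw [cld_pos R h, ← LinearMap.mem_ker, Submodule.ker_mkQ]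
  apply Submodule.subset_span
  right
  exact ⟨i, j, E, _, Or.inr rfl, rfl⟩

lemma cld_arnold {n i j k : ℕ} {E : Multiset (ℕ × ℕ)} (hik : i ≠ k)
    (h : IsDiagOn n ((i, j) ::ₘ (j, k) ::ₘ E)) :
    cld R n ((i, j) ::ₘ (j, k) ::ₘ E) + cld R n ((j, k) ::ₘ (k, i) ::ₘ E)
      + cld R n ((k, i) ::ₘ (i, j) ::ₘ E) = 0 := by
  have h0 := h
  simp only [diag_cons] at h0
  obtain ⟨⟨a1, a2, a3⟩, ⟨b1, b2, b3⟩, hE⟩ := h0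
  have h2 : IsDiagOn n ((j, k) ::ₘ (k, i) ::ₘ E) := by
    simp only [diag_cons]; exact ⟨⟨b1, b2, b3⟩, ⟨b2, a1, hik.symm⟩, hE⟩
  have h3 : IsDiagOn n ((k, i) ::ₘ (i, j) ::ₘ E) := by
    simp only [diag_cons]; exact ⟨⟨b2, a1, hik.symm⟩, ⟨a1, a2, a3⟩, hE⟩
  rw [cld_pos R h, cld_pos R h2, cld_pos R h3, ← map_add, ← map_add, ← LinearMap.mem_ker,
    Submodule.ker_mkQ]
  apply Submodule.subset_span
  left; left
  exact ⟨i, j, k, E, _, _, _, a3, b3, hik, rfl, rfl, rfl, rfl⟩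

def extD (n : ℕ) : Option (Fin n) → Multiset (ℕ × ℕ) → Multiset (ℕ × ℕ)
  | none, E => E
  | some i, E => (n, (i : ℕ)) ::ₘ E

lemma ext_diag {n : ℕ} (o : Option (Fin n)) {E : Multiset (ℕ × ℕ)} (h : IsDiagOn n E) :
    IsDiagOn (n + 1) (extD n o E) := by
  have h' : IsDiagOn (n + 1) E := fun e he => by
    obtain ⟨a, b, c⟩ := h e he; exact ⟨by omega, by omega, c⟩
  cases o with
  | none => exact h'
  | some i =>
    simp only [extD]
    rw [diag_cons]
    have := i.2
    exact ⟨⟨by simp, by simp; try omega, by simp; try omega⟩, h'⟩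

lemma extD_cons (n : ℕ) (o : Option (Fin n)) (e : ℕ × ℕ) (E : Multiset (ℕ × ℕ)) :
    extD n o (e ::ₘ E) = e ::ₘ extD n o E := by
  cases o with
  | none => rfl
  | some i => exact Multiset.cons_swap _ _ _

def extDL (n : ℕ) (o : Option (Fin n)) : DeltaF R n →ₗ[R] SiopQ R (n + 1) :=
  Finsupp.linearCombination R (fun E : DiagOn n => cld R (n + 1) (extD n o E.1))

lemma extDL_single (n : ℕ) (o : Option (Fin n)) (E : DiagOn n) :
    extDL R n o (Finsupp.single E 1) = cld R (n + 1) (extD n o E.1) := by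
  simp [extDL]

lemma extDL_ker (n : ℕ) (o : Option (Fin n)) : IsubD R n ≤ LinearMap.ker (extDL R n o) := by
  refine Submodule.span_le.2 ?_
  rintro x ((hx | hx) | hx)
  · obtain ⟨i, j, k, E, G₁, G₂, G₃, h1, h2, h3, e1, e2, e3, rfl⟩ := hx
    have hd := ext_diag o G₁.2
    simp only [SetLike.mem_coe, LinearMap.mem_ker, map_add, extDL_single, e1, e2, e3, extD_cons]
      at hd ⊢
    exact cld_arnold R h3 hd
  · obtain ⟨i, j, E, G₁, G₂, e1, e2, rfl⟩ := hx
    have hd := ext_diag o G₁.2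
    simp only [SetLike.mem_coe, LinearMap.mem_ker, map_add, extDL_single, e1, e2, extD_cons]
      at hd ⊢
    exact cld_symm R hd
  · obtain ⟨i, j, E, G₁, e1 | e1, rfl⟩ := hx
    · have hd := ext_diag o G₁.2
      simp only [SetLike.mem_coe, LinearMap.mem_ker, map_add, extDL_single, e1, extD_cons]
        at hd ⊢
      exact cld_doubled R hd
    · have hd := ext_diag o G₁.2
      simp only [SetLike.mem_coe, LinearMap.mem_ker, map_add, extDL_single, e1, extD_cons]
        at hd ⊢
      exact cld_doubled' R hd

def extDQ (n : ℕ) (o : Option (Fin n)) : SiopQ R n →ₗ[R] SiopQ R (n + 1) :=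
  (IsubD R n).liftQ (extDL R n o) (extDL_ker R n o)

lemma extDQ_cl {n : ℕ} (o : Option (Fin n)) {E : Multiset (ℕ × ℕ)} (h : IsDiagOn n E) :
    extDQ R n o (cld R n E) = cld R (n + 1) (extD n o E) := by
  rw [cld_pos R h, extDQ, Submodule.mkQ_apply, Submodule.liftQ_apply]
  exact extDL_single R n o ⟨E, h⟩

def WS (n : ℕ) : Submodule R (SiopQ R (n + 1)) := ⨆ o, LinearMap.range (extDQ R n o)

lemma mem_WS {n : ℕ} (o : Option (Fin n)) {E : Multiset (ℕ × ℕ)} (h : IsDiagOn n E) :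
    cld R (n + 1) (extD n o E) ∈ WS R n := by
  rw [← extDQ_cl R o h]
  exact Submodule.mem_iSup_of_mem o ⟨_, rfl⟩

def touch (n : ℕ) (E : Multiset (ℕ × ℕ)) : ℕ := E.countP (fun e => e.1 = n ∨ e.2 = n)

lemma touch_cons (n : ℕ) (e : ℕ × ℕ) (E : Multiset (ℕ × ℕ)) :
    touch n (e ::ₘ E) = touch n E + if e.1 = n ∨ e.2 = n then 1 else 0 := by
  unfold touch; rw [Multiset.countP_cons]

lemma diag_down {n : ℕ} {E : Multiset (ℕ × ℕ)} (h : IsDiagOn (n + 1) E) (h0 : touch n E = 0) :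
    IsDiagOn n E := by
  intro e he
  unfold touch at h0
  rw [Multiset.countP_eq_zero] at h0
  have h1 := h0 e he
  obtain ⟨a, b, c⟩ := h e he
  exact ⟨by omega, by omega, c⟩

lemma touch_pos {n : ℕ} {E : Multiset (ℕ × ℕ)} (h : IsDiagOn (n + 1) E) (h0 : touch n E ≠ 0) :
    ∃ i E', i < n ∧ (E = (i, n) ::ₘ E' ∨ E = (n, i) ::ₘ E') := by
  unfold touch at h0
  have := Multiset.countP_pos.1 (Nat.pos_of_ne_zero h0)
  obtain ⟨⟨x, y⟩, he, hn⟩ := this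
  obtain ⟨E', rfl⟩ := Multiset.exists_cons_of_mem he
  obtain ⟨a, b, c⟩ := h _ he
  simp only at a b c hn
  rcases hn with rfl | rfl
  · exact ⟨y, E', by omega, Or.inr rfl⟩
  · exact ⟨x, E', by omega, Or.inl rfl⟩

lemma cld_mem_WS {n : ℕ} (k : ℕ) : ∀ {E : Multiset (ℕ × ℕ)} (_ : IsDiagOn (n + 1) E)
    (_ : touch n E = k), cld R (n + 1) E ∈ WS R n := by
  induction k using Nat.strong_induction_on with
  | _ k ih =>
    intro E h hk
    by_cases h0 : touch n E = 0
    · exact mem_WS R none (diag_down h h0)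
    · obtain ⟨i, E', hi, hE⟩ := touch_pos h h0
      have key : ∀ {E' : Multiset (ℕ × ℕ)}, IsDiagOn (n + 1) ((i, n) ::ₘ E') →
          touch n ((i, n) ::ₘ E') = k → cld R (n + 1) ((i, n) ::ₘ E') ∈ WS R n := by
        intro E' h hk
        rw [touch_cons] at hk
        simp only [or_true, if_true] at hk
        by_cases h1 : touch n E' = 0
        · rw [eq_neg_of_add_eq_zero_left (cld_symm R h)]
          exact Submodule.neg_mem _ (mem_WS R (some ⟨i, hi⟩) (diag_down (diag_cons.1 h).2 h1))
        · obtain ⟨j, E'', hj, hE'⟩ := touch_pos (diag_cons.1 h).2 h1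
          have key2 : ∀ {E'' : Multiset (ℕ × ℕ)}, IsDiagOn (n + 1) ((i, n) ::ₘ (n, j) ::ₘ E'') →
              touch n ((n, j) ::ₘ E'') + 1 = k →
              cld R (n + 1) ((i, n) ::ₘ (n, j) ::ₘ E'') ∈ WS R n := by
            intro E'' h hk
            rw [touch_cons] at hk
            simp only [true_or, if_true] at hk
            by_cases hij : i = j
            · subst hij
              rw [cld_doubled' R h]; exact Submodule.zero_mem _
            · have ha := cld_arnold R hij h
              rw [add_assoc] at ha
              rw [eq_neg_of_add_eq_zero_left ha]
              have h0 := h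
              simp only [diag_cons] at h0
              obtain ⟨-, -, hE⟩ := h0
              apply Submodule.neg_mem
              apply Submodule.add_mem
              · apply ih (touch n E'' + 1) (by omega)
                · simp only [diag_cons]; exact ⟨⟨by omega, by omega, by omega⟩,
                    ⟨by omega, by omega, by omega⟩, hE⟩
                · have q1 : j ≠ n := by omega
                  have q2 : i ≠ n := by omega
                  simp [touch_cons, q1, q2]
              · apply ih (touch n E'' + 1) (by omega)
                · simp only [diag_cons]; exact ⟨⟨by omega, by omega, by omega⟩,
                    ⟨by omega, by omega, by omega⟩, hE⟩
                · have q1 : j ≠ n := by omega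
                  have q2 : i ≠ n := by omega
                  simp [touch_cons, q1, q2]
          rcases hE' with rfl | rfl
          · rw [Multiset.cons_swap] at h ⊢
            have h' := diag_swap h
            rw [eq_neg_of_add_eq_zero_left (cld_symm R h)]
            apply Submodule.neg_mem
            rw [Multiset.cons_swap] at h' ⊢
            apply key2 h'
            rw [touch_cons] at hk ⊢
            simpa using hk
          · exact key2 h hk
      rcases hE with rfl | rfl
      · exact key h hk
      · rw [eq_neg_of_add_eq_zero_left (cld_symm R h)]
        apply Submodule.neg_mem
        apply key (diag_swap h)
        rw [touch_cons] at hk ⊢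
        simpa using hk

lemma span_cld (n : ℕ) : Submodule.span R {x | ∃ E, IsDiagOn n E ∧ x = cld R n E} = ⊤ := by
  rw [eq_top_iff]
  rintro x -
  obtain ⟨y, rfl⟩ := (IsubD R n).mkQ_surjective x
  induction y using Finsupp.induction_linear with
  | zero => simp
  | add f g hf hg => rw [map_add]; exact Submodule.add_mem _ hf hg
  | single F a =>
    rw [← mul_one a, ← smul_eq_mul, ← Finsupp.smul_single, map_smul]
    apply Submodule.smul_mem
    apply Submodule.subset_span
    exact ⟨F.1, F.2, (cld_pos R F.2).symm⟩

lemma WS_top (n : ℕ) : WS R n = ⊤ := by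
  rw [eq_top_iff, ← span_cld, Submodule.span_le]
  rintro x ⟨F, hF, rfl⟩
  exact cld_mem_WS R _ hF rfl

end GTPairing

namespace GTPairing
open MvPolynomial

/-- kill all variables touching `n` -/
def ev (n : ℕ) : MP →ₐ[ℤ] MP := aeval (fun e => if e.1 = n ∨ e.2 = n then 0 else X e)

lemma ev_X (n : ℕ) (e : ℕ × ℕ) : ev n (X e) = if e.1 = n ∨ e.2 = n then 0 else X e := by
  simp [ev]

lemma coeff_ev (n : ℕ) (P : MP) : ∀ (m : ℕ × ℕ →₀ ℕ), (∀ e ∈ m.support, ¬ (e.1 = n ∨ e.2 = n)) →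
    coeff m (ev n P) = coeff m P := by
  induction P using MvPolynomial.induction_on with
  | C a => intro m _; simp [ev]
  | add p q hp hq => intro m hm; rw [map_add, coeff_add, coeff_add, hp m hm, hq m hm]
  | mul_X p e hp =>
    intro m hm
    rw [map_mul, ev_X]
    split_ifs with h
    · rw [mul_zero, coeff_zero, coeff_mul_X', if_neg]
      exact fun hh => hm e hh h
    · rw [coeff_mul_X', coeff_mul_X']
      split_ifs with h'
      · apply hp
        intro e' he'
        apply hm
        rw [Finsupp.mem_support_iff] at he' ⊢
        rw [Finsupp.tsub_apply] at he'
        omega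
      · rfl

lemma coeff_ev' {n : ℕ} {E : Multiset (ℕ × ℕ)} (hE : IsDiagOn n E) (P : MP) :
    coeff (Multiset.toFinsupp E) (ev n P) = coeff (Multiset.toFinsupp E) P := by
  apply coeff_ev
  intro e he
  have : e ∈ E := by simpa using he
  have := hE e this
  omega

lemma ev_tp {n : ℕ} {t : PTree} (h : n ∉ t.leaves) : ev n (tp t) = tp t := by
  induction t with
  | leaf a => simp [tp_leaf]
  | node l r hl hr =>
    simp only [PTree.leaves, List.mem_append, not_or] at h
    rw [tp_node, map_mul, map_mul, hl h.1, hr h.2]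
    congr 1
    simp only [ell, map_sum, map_sub, ev_X]
    refine Finset.sum_congr rfl fun i hi => Finset.sum_congr rfl fun j hj => ?_
    have h1 : i ≠ n := by rintro rfl; exact h.1 (by simpa using hi)
    have h2 : j ≠ n := by rintro rfl; exact h.2 (by simpa using hj)
    simp [h1, h2]

lemma ev_fp {n : ℕ} {F : Finset PTree} (h : n ∉ fset F) : ev n (fp F) = fp F := by
  rw [fp, map_prod]
  exact Finset.prod_congr rfl fun t ht => ev_tp fun hh => h ⟨t, ht, hh⟩

lemma ev_ell {n : ℕ} (l r l' r' : PTree) 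
    (hl' : l'.leaves.toFinset.erase n = l.leaves.toFinset)
    (hr' : r'.leaves.toFinset.erase n = r.leaves.toFinset) :
    ev n (ell (.node l' r')) = ell (.node l r) := by
  simp only [ell, map_sum, map_sub, ev_X]
  rw [← hl', ← hr']
  have hz : ∀ i ∈ l'.leaves.toFinset, ∑ j ∈ r'.leaves.toFinset,
      ((if j = n ∨ i = n then (0 : MP) else X (j, i)) - if i = n ∨ j = n then 0 else X (i, j)) =
      if i = n then 0 else ∑ j ∈ r'.leaves.toFinset.erase n, (X (j, i) - X (i, j)) := by
    intro i _
    split_ifs with h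
    · simp [h]
    · rw [← Finset.sum_erase (a := n) _ (by simp)]
      refine Finset.sum_congr rfl fun j hj => ?_
      simp [h, Finset.ne_of_mem_erase hj]
  rw [Finset.sum_congr rfl hz, ← Finset.sum_erase (a := n) _ (by simp)]
  refine Finset.sum_congr rfl fun i hi => ?_
  simp [Finset.ne_of_mem_erase hi]

lemma tp_sub {i n : ℕ} {t : PTree} (ht : t.leaves.Nodup) (hi : i ∈ t.leaves) (hn : n ∉ t.leaves) :
    ∃ Q, tp (sub i n t) = (X (n, i) - X (i, n)) * Q ∧ ev n Q = tp t := by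
  induction t with
  | leaf a =>
    simp [PTree.leaves] at hi
    subst hi
    refine ⟨1, ?_, by simp [tp_leaf]⟩
    simp [sub, PTree.graft, tp_node, tp_leaf, ell, PTree.leaves]
  | node l r hl hr =>
    obtain ⟨h1, h2, h3⟩ := nodup_node ht
    simp only [PTree.leaves, List.mem_append, not_or] at hi hn
    have key : ∀ s : PTree, n ∉ s.leaves → (sub i n s).leaves.toFinset.erase n = s.leaves.toFinset := by
      intro s hs
      ext a
      simp only [Finset.mem_erase, List.mem_toFinset, mem_sub]
      constructor
      · tauto
      · intro h; exact ⟨by rintro rfl; exact hs h, Or.inl h⟩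
    have kk : ev n (ell (.node (sub i n l) (sub i n r))) = ell (.node l r) :=
      ev_ell l r _ _ (key l hn.1) (key r hn.2)
    rw [sub_node, tp_node, tp_node]
    rcases hi with hi | hi
    · obtain ⟨Q, hQ, hQ'⟩ := hl h1 hi hn.1
      have hs : sub i n r = r := graft_notmem (h3 i hi) _
      refine ⟨Q * tp r * ell (.node (sub i n l) (sub i n r)), ?_, ?_⟩
      · rw [hQ, hs]; ring
      · rw [map_mul, map_mul, hQ', kk, ev_tp hn.2]
    · obtain ⟨Q, hQ, hQ'⟩ := hr h2 hi hn.2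
      have hs : sub i n l = l := graft_notmem (fun hh => h3 i hh hi) _
      refine ⟨tp l * Q * ell (.node (sub i n l) (sub i n r)), ?_, ?_⟩
      · rw [hQ, hs]; ring
      · rw [map_mul, map_mul, hQ', kk, ev_tp hn.1]

lemma fp_ext_some {n : ℕ} (i : Fin n) {F : Finset PTree} (h : IsForestOn n F) :
    ∃ Q, fp (extF n (some i) F) = (X (n, (i : ℕ)) - X ((i : ℕ), n)) * Q ∧ ev n Q = fp F := by
  obtain ⟨t, ht, hit⟩ := h.2.2.2 i i.2
  obtain ⟨F₀, hF₀, rfl⟩ : ∃ F₀, t ∉ F₀ ∧ insert t F₀ = F :=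
    ⟨F.erase t, Finset.notMem_erase _ _, Finset.insert_erase ht⟩
  have hI := Ins.of_forest hF₀ h
  have hI' := hI.ext_some i
  have hn : n ∉ fset (insert t F₀) := by rw [((isForest_iff n _).1 h).2]; simp
  rw [fset_insert, Set.mem_union, not_or] at hn
  have hF : F₀.image (sub i n) = F₀ := by
    rw [Finset.image_congr (g := id), Finset.image_id]
    intro s hs
    refine graft_notmem (fun hh => ?_) _
    exact Set.disjoint_left.1 hI.2.2.1 hit ⟨s, hs, hh⟩
  rw [hF] at hI'
  obtain ⟨Q, hQ, hQ'⟩ := tp_sub hI.1 hit hn.1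
  refine ⟨Q * fp F₀, ?_, ?_⟩
  · simp only [extF, Finset.image_insert, hF]
    rw [fp_insert hI'.notMem, hQ]; ring
  · rw [map_mul, hQ', ev_fp hn.2, fp_insert hF₀]

lemma pair_ext {n : ℕ} {E : Multiset (ℕ × ℕ)} {F : Finset PTree} (hE : IsDiagOn n E)
    (hF : IsForestOn n F) (o o' : Option (Fin n)) :
    pairDF (extD n o E) (extF n o' F) = if o = o' then pairDF E F else 0 := by
  have h1 := (isForest_iff _ _).1 hF
  have h2 := (isForest_iff _ _).1 (ext_forest o' hF)
  have hn : n ∉ fset F := by rw [h1.2]; simp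
  rw [pairDF_eq h1.1, pairDF_eq h2.1]
  cases o' with
  | none =>
    have hl : fp (extF n none F) = fp F := by
      have : (PTree.leaf n) ∉ F := fun hh => hn ⟨_, hh, by simp [PTree.leaves]⟩
      simp only [extF]
      rw [fp_insert this, tp_leaf, one_mul]
    rw [hl]
    cases o with
    | none => simp [extD]
    | some i =>
      simp only [extD]
      rw [(fp_Sup h1.1).ml.coeff_cons, (fp_Sup h1.1).supp]
      · simp
      · exact fun hh => hn hh.1
  | some i =>
    obtain ⟨Q, hQ, hQ'⟩ := fp_ext_some i hF
    have hin : (i : ℕ) ≠ n := i.2.ne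
    cases o with
    | none =>
      simp only [extD]
      rw [← coeff_ev' hE, hQ, map_mul, map_sub, ev_X, ev_X]
      simp
    | some j =>
      simp only [extD]
      rw [(fp_Sup h2.1).ml.coeff_cons, ← coeff_ev' hE, hQ, Derivation.leibniz]
      simp only [smul_eq_mul, map_add, map_mul, map_sub, ev_X, hQ', pderiv_X]
      by_cases hij : j = i
      · subst hij
        simp [hin, hin.symm]
      · have : (i : ℕ) ≠ j := fun hh => hij (Fin.ext hh.symm)
        simp [hin, hin.symm, hij, this]

def Idx : ℕ → Type
  | 0 => Unit
  | n + 1 => Idx n × Option (Fin n)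

instance Idx.finite : ∀ n, Finite (Idx n)
  | 0 => inferInstanceAs (Finite Unit)
  | n + 1 => by
    have := Idx.finite n
    exact inferInstanceAs (Finite (Idx n × Option (Fin n)))

def forestI : ∀ n, Idx n → Finset PTree
  | 0, _ => ∅
  | n + 1, f => extF n f.2 (forestI n f.1)

def diagI : ∀ n, Idx n → Multiset (ℕ × ℕ)
  | 0, _ => 0
  | n + 1, f => extD n f.2 (diagI n f.1)

lemma forestI_on : ∀ n f, IsForestOn n (forestI n f)
  | 0, _ => by simp [IsForestOn, forestI]
  | n + 1, f => ext_forest f.2 (forestI_on n f.1)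

lemma diagI_on : ∀ n f, IsDiagOn n (diagI n f)
  | 0, _ => by simp [IsDiagOn, diagI]
  | n + 1, f => ext_diag f.2 (diagI_on n f.1)

lemma pairI : ∀ n (f g : Idx n), pairDF (diagI n f) (forestI n g) = if f = g then 1 else 0
  | 0, f, g => by
    have : f = g := Subsingleton.elim (α := Unit) f g
    simp [this, diagI, forestI, pairDF, sameRho]
  | n + 1, f, g => by
    obtain ⟨f, o⟩ := f
    obtain ⟨g, o'⟩ := g
    have := pair_ext (diagI_on n f) (forestI_on n g) o o'
    rw [pairI n f g] at this
    refine this.trans ?_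
    by_cases h1 : o = o' <;> by_cases h2 : f = g
    · subst h1 h2; rw [if_pos rfl, if_pos rfl]; exact (if_pos rfl).symm
    · have : ((f, o) : Idx (n+1)) ≠ (g, o') := fun q => h2 (Prod.mk.inj q).1
      simp [h2]; exact this
    · have : ((f, o) : Idx (n+1)) ≠ (g, o') := fun q => h1 (Prod.mk.inj q).2
      simp [h1]; exact this
    · have : ((f, o) : Idx (n+1)) ≠ (g, o') := fun q => h1 (Prod.mk.inj q).2
      simp [h1]; exact this

variable (R : Type) [CommRing R]

lemma span_forestI : ∀ n, Submodule.span R (Set.range fun f => cl R n (forestI n f)) = ⊤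
  | 0 => by
    rw [eq_top_iff, ← span_cl]
    apply Submodule.span_mono
    rintro x ⟨F, hF, rfl⟩
    refine ⟨(), ?_⟩
    have : F = ∅ := by
      rw [Finset.eq_empty_iff_forall_notMem]
      intro t ht
      obtain ⟨a, ha⟩ := exists_leaf t
      exact absurd (hF.2.2.1 t ht a ha) (by omega)
    subst this; rfl
  | n + 1 => by
    rw [eq_top_iff, ← WP_top, WP, iSup_le_iff]
    intro o
    rw [LinearMap.range_eq_map, ← span_forestI n, Submodule.map_span, Submodule.span_le]
    rintro _ ⟨_, ⟨f, rfl⟩, rfl⟩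
    apply Submodule.subset_span
    exact ⟨(f, o), (extQ_cl R o (forestI_on n f)).symm⟩

lemma span_diagI : ∀ n, Submodule.span R (Set.range fun f => cld R n (diagI n f)) = ⊤
  | 0 => by
    rw [eq_top_iff, ← span_cld]
    apply Submodule.span_mono
    rintro x ⟨F, hF, rfl⟩
    refine ⟨(), ?_⟩
    have : F = 0 := by
      rw [Multiset.eq_zero_iff_forall_notMem]
      intro t ht
      exact absurd (hF t ht).1 (by omega)
    subst this; rfl
  | n + 1 => by
    rw [eq_top_iff, ← WS_top, WS, iSup_le_iff]
    intro o
    rw [LinearMap.range_eq_map, ← span_diagI n, Submodule.map_span, Submodule.span_le]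
    rintro _ ⟨_, ⟨f, rfl⟩, rfl⟩
    apply Submodule.subset_span
    exact ⟨(f, o), (extDQ_cl R o (diagI_on n f)).symm⟩

end GTPairing

namespace GTPairing
open MvPolynomial

lemma perfect_aux {R M N ι : Type} [CommRing R] [AddCommGroup M] [Module R M] [AddCommGroup N]
    [Module R N] [Fintype ι] (p : M →ₗ[R] N →ₗ[R] R) (d : ι → M) (φ : ι → N)
    (hy : ∀ y, y = ∑ f, p y (φ f) • d f) (hx : ∀ x, x = ∑ f, p (d f) x • φ f) :
    Function.Bijective p := by
  constructor
  · rw [← LinearMap.ker_eq_bot, LinearMap.ker_eq_bot']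
    intro y h
    rw [hy y]; simp [h]
  · intro g
    refine ⟨∑ f, g (φ f) • d f, ?_⟩
    ext x
    conv_rhs => rw [hx x]
    simp [mul_comm]

lemma expand_aux {R M N ι : Type} [CommRing R] [AddCommGroup M] [Module R M] [AddCommGroup N]
    [Module R N] [Fintype ι] (p : M →ₗ[R] N →ₗ[R] R) (d : ι → M) (φ : ι → N)
    (hd : Submodule.span R (Set.range d) = ⊤) (h : ∀ f g, p (d f) (φ g) = if f = g then 1 else 0)
    (y : M) : y = ∑ f, p y (φ f) • d f := by
  have : y ∈ Submodule.span R (Set.range d) := by rw [hd]; trivial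
  induction this using Submodule.span_induction with
  | mem x hx => obtain ⟨g, rfl⟩ := hx; simp [h]
  | zero => simp
  | add x y _ _ hx hy => 
    simp only [map_add, LinearMap.add_apply, add_smul, Finset.sum_add_distrib]
    rw [← hx, ← hy]
  | smul a x _ hx =>
    simp only [map_smul, LinearMap.smul_apply, smul_eq_mul, mul_smul, ← Finset.smul_sum]
    rw [← hx]

variable (R : Type) [CommRing R]

def pL (n : ℕ) (E : Multiset (ℕ × ℕ)) : PhiF R n →ₗ[R] R :=
  Finsupp.linearCombination R (fun F : ForestOn n => ((pairDF E F.1 : ℤ) : R))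

lemma pL_single (n : ℕ) (E : Multiset (ℕ × ℕ)) (F : ForestOn n) :
    pL R n E (Finsupp.single F 1) = ((pairDF E F.1 : ℤ) : R) := by simp [pL]

lemma forest_PF {n : ℕ} (F : ForestOn n) : PF F.1 := ((isForest_iff n F.1).1 F.2).1

lemma pL_ker (n : ℕ) (E : Multiset (ℕ × ℕ)) : JsubF R n ≤ LinearMap.ker (pL R n E) := by
  refine Submodule.span_le.2 ?_
  rintro x (hx | hx)
  · obtain ⟨F₀, D, A, B, C, m, F₁, F₂, F₃, d1, d2, n1, n2, n3, e1, e2, e3, rfl⟩ := hx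
    obtain ⟨c, hc⟩ := graft_ctx d1 d2
    rw [hc] at n1 n2 n3 e1 e2 e3
    have := pair_forest_jacobi c A B C n1 n2 n3 (e1 ▸ forest_PF F₁) (e2 ▸ forest_PF F₂)
      (e3 ▸ forest_PF F₃) E
    simp only [SetLike.mem_coe, LinearMap.mem_ker, map_add, pL_single, e1, e2, e3]
    exact_mod_cast congrArg (Int.cast : ℤ → R) this
  · obtain ⟨F₀, D, A, B, m, F₁, F₂, d1, d2, n1, n2, e1, e2, rfl⟩ := hx
    obtain ⟨c, hc⟩ := graft_ctx d1 d2
    rw [hc] at n1 n2 e1 e2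
    have := pair_forest_symm c A B n1 n2 (e1 ▸ forest_PF F₁) (e2 ▸ forest_PF F₂) E
    simp only [SetLike.mem_coe, LinearMap.mem_ker, map_add, pL_single, e1, e2]
    exact_mod_cast congrArg (Int.cast : ℤ → R) this

def pQ (n : ℕ) (E : Multiset (ℕ × ℕ)) : PoisQ R n →ₗ[R] R :=
  (JsubF R n).liftQ (pL R n E) (pL_ker R n E)

lemma pQ_mk (n : ℕ) (E : Multiset (ℕ × ℕ)) (x : PhiF R n) :
    pQ R n E (Submodule.Quotient.mk x) = pL R n E x := rfl

def pD (n : ℕ) : DeltaF R n →ₗ[R] PoisQ R n →ₗ[R] R :=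
  Finsupp.linearCombination R (fun D : DiagOn n => pQ R n D.1)

lemma pD_single (n : ℕ) (D : DiagOn n) : pD R n (Finsupp.single D 1) = pQ R n D.1 := by simp [pD]

lemma ext_pois {n : ℕ} {f : PoisQ R n →ₗ[R] R}
    (h : ∀ F : ForestOn n, f (Submodule.Quotient.mk (Finsupp.single F 1)) = 0) : f = 0 := by
  apply Submodule.linearMap_qext
  apply Finsupp.lhom_ext'
  intro F
  apply LinearMap.ext_ring
  simpa using h F

lemma pD_ker (n : ℕ) : IsubD R n ≤ LinearMap.ker (pD R n) := by
  refine Submodule.span_le.2 ?_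
  rintro x ((hx | hx) | hx)
  · obtain ⟨i, j, k, E, G₁, G₂, G₃, h1, h2, h3, e1, e2, e3, rfl⟩ := hx
    simp only [SetLike.mem_coe, LinearMap.mem_ker, map_add, pD_single, e1, e2, e3]
    apply ext_pois
    intro F
    simp only [LinearMap.add_apply, pQ_mk, pL_single]
    exact_mod_cast congrArg (Int.cast : ℤ → R) (pair_arnold (forest_PF F) i j k h1 h2 h3 E)
  · obtain ⟨i, j, E, G₁, G₂, e1, e2, rfl⟩ := hx
    simp only [SetLike.mem_coe, LinearMap.mem_ker, map_add, pD_single, e1, e2]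
    apply ext_pois
    intro F
    simp only [LinearMap.add_apply, pQ_mk, pL_single]
    exact_mod_cast congrArg (Int.cast : ℤ → R) (pair_symm (forest_PF F) i j E)
  · obtain ⟨i, j, E, G, e1, rfl⟩ := hx
    simp only [SetLike.mem_coe, LinearMap.mem_ker, pD_single]
    apply ext_pois
    intro F
    simp only [pQ_mk, pL_single]
    have := pair_doubled (forest_PF F) i j E
    rcases e1 with e1 | e1
    · rw [e1, this.1, Int.cast_zero]
    · rw [e1, this.2, Int.cast_zero]

def pp (n : ℕ) : SiopQ R n →ₗ[R] PoisQ R n →ₗ[R] R := (IsubD R n).liftQ (pD R n) (pD_ker R n)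

lemma pp_mk (n : ℕ) (y : DeltaF R n) (x : PhiF R n) :
    pp R n (Submodule.Quotient.mk y) (Submodule.Quotient.mk x) = pairDFF y x := by
  change pD R n y (Submodule.Quotient.mk x) = _
  rw [pD, Finsupp.linearCombination_apply, Finsupp.sum, LinearMap.sum_apply, pairDFF, Finsupp.sum]
  refine Finset.sum_congr rfl fun D _ => ?_
  rw [LinearMap.smul_apply, pQ_mk, pL, Finsupp.linearCombination_apply, Finsupp.sum, Finsupp.sum,
    Finset.smul_sum]
  refine Finset.sum_congr rfl fun F _ => ?_
  simp [mul_assoc]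

lemma pp_cl {n : ℕ} {E : Multiset (ℕ × ℕ)} {F : Finset PTree} (hE : IsDiagOn n E)
    (hF : IsForestOn n F) : pp R n (cld R n E) (cl R n F) = ((pairDF E F : ℤ) : R) := by
  rw [cl_pos R hF, cld_pos R hE]
  change pD R n (Finsupp.single ⟨E, hE⟩ 1) (Submodule.Quotient.mk (Finsupp.single ⟨F, hF⟩ 1)) = _
  rw [show pD R n (Finsupp.single ⟨E, hE⟩ 1) = pQ R n E from pD_single R n ⟨E, hE⟩, pQ_mk]
  exact pL_single R n E ⟨F, hF⟩

lemma degI (n : ℕ) (f : Idx n) : Multiset.card (diagI n f) = forestDeg (forestI n f) := by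
  apply pair_deg ((isForest_iff n _).1 (forestI_on n f)).1
  rw [pairI]; simp

lemma cl_mem {n k : ℕ} {F : Finset PTree} (hF : IsForestOn n F) (h : forestDeg F = k) :
    cl R n F ∈ PoisK R n k := by
  rw [cl_pos R hF]
  exact Submodule.mem_map_of_mem (Submodule.subset_span ⟨⟨F, hF⟩, h, rfl⟩)

lemma cld_mem {n k : ℕ} {E : Multiset (ℕ × ℕ)} (hE : IsDiagOn n E) (h : Multiset.card E = k) :
    cld R n E ∈ SiopK R n k := by
  rw [cld_pos R hE]
  exact Submodule.mem_map_of_mem (Submodule.subset_span ⟨⟨E, hE⟩, h, rfl⟩)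

lemma siop_zero {n k : ℕ} {F : Finset PTree} (hF : IsForestOn n F) (h : forestDeg F ≠ k)
    {y : SiopQ R n} (hy : y ∈ SiopK R n k) : pp R n y (cl R n F) = 0 := by
  have : SiopK R n k ≤ LinearMap.ker ((pp R n).flip (cl R n F)) := by
    refine Submodule.map_le_iff_le_comap.2 (Submodule.span_le.2 ?_)
    rintro _ ⟨D, hD, rfl⟩
    change pp R n ((IsubD R n).mkQ (Finsupp.single D 1)) (cl R n F) = 0
    have e := pp_cl R D.2 hF
    rw [cld_pos R D.2] at e
    refine e.trans ?_
    have : pairDF D.1 F = 0 := by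
      by_contra hh
      exact h ((pair_deg ((isForest_iff n _).1 hF).1 _ hh).symm.trans hD)
    rw [this, Int.cast_zero]
  exact this hy

lemma pois_zero {n k : ℕ} {E : Multiset (ℕ × ℕ)} (hE : IsDiagOn n E) (h : Multiset.card E ≠ k)
    {x : PoisQ R n} (hx : x ∈ PoisK R n k) : pp R n (cld R n E) x = 0 := by
  have : PoisK R n k ≤ LinearMap.ker (pp R n (cld R n E)) := by
    refine Submodule.map_le_iff_le_comap.2 (Submodule.span_le.2 ?_)
    rintro _ ⟨F, hF, rfl⟩
    change pp R n (cld R n E) ((JsubF R n).mkQ (Finsupp.single F 1)) = 0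
    have e := pp_cl R hE F.2
    rw [cl_pos R F.2] at e
    refine e.trans ?_
    have : pairDF E F.1 = 0 := by
      by_contra hh
      exact h ((pair_deg (forest_PF F) _ hh).trans hF)
    rw [this, Int.cast_zero]
  exact this hx

lemma pp_perfect (n k : ℕ) :
    Function.Bijective ((pp R n).domRestrict₁₂ (SiopK R n k) (PoisK R n k)) ∧
    Function.Bijective ((pp R n).flip.domRestrict₁₂ (PoisK R n k) (SiopK R n k)) := by
  have := Fintype.ofFinite (Idx n)
  let d : Idx n → SiopK R n k := fun f => if h : Multiset.card (diagI n f) = k then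
    ⟨cld R n (diagI n f), cld_mem R (diagI_on n f) h⟩ else 0
  let φ : Idx n → PoisK R n k := fun f => if h : Multiset.card (diagI n f) = k then
    ⟨cl R n (forestI n f), cl_mem R (forestI_on n f) ((degI n f).symm.trans h)⟩ else 0
  have hδ : ∀ f g, pp R n (cld R n (diagI n f)) (cl R n (forestI n g)) = if f = g then 1 else 0 := by
    intro f g
    rw [pp_cl R (diagI_on n f) (forestI_on n g), pairI]
    split_ifs <;> simp
  have hy : ∀ y : SiopK R n k, y = ∑ f, pp R n y.1 (φ f).1 • d f := by
    intro y
    apply Subtype.ext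
    rw [Submodule.coe_sum]
    conv_lhs => rw [expand_aux (pp R n) _ _ (span_diagI R n) hδ y.1]
    refine Finset.sum_congr rfl fun f _ => ?_
    by_cases h : Multiset.card (diagI n f) = k
    · simp [d, φ, h]
    · rw [siop_zero R (forestI_on n f) (by rwa [← degI]) y.2]
      simp [d, h]
  have hx : ∀ x : PoisK R n k, x = ∑ f, pp R n (d f).1 x.1 • φ f := by
    intro x
    apply Subtype.ext
    rw [Submodule.coe_sum]
    conv_lhs => rw [expand_aux (pp R n).flip (fun f => cl R n (forestI n f))
      (fun f => cld R n (diagI n f)) (span_forestI R n)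
      (fun f g => by rw [LinearMap.flip_apply, hδ]; simp only [eq_comm]) x.1]
    refine Finset.sum_congr rfl fun f _ => ?_
    rw [LinearMap.flip_apply]
    by_cases h : Multiset.card (diagI n f) = k
    · simp [d, φ, h]
    · rw [pois_zero R (diagI_on n f) h x.2]
      simp [φ, h]
  exact ⟨perfect_aux _ d φ hy hx, perfect_aux _ φ d hx hy⟩

end GTPairing

namespace GTPairing

/-- the configuration pairing between `Φ_n` and `Δ_n` descends to a
pairing between `Pois(n)` and `Siop(n)` which restricts, for every `k`, to a perfect
pairing between `Pois_k(n)` and `Siop_k(n)`. -/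
theorem perfect_pairing_Pois_Siop (R : Type) [CommRing R] (n : ℕ) :
    ∃ p : SiopQ R n →ₗ[R] PoisQ R n →ₗ[R] R,
      (∀ (y : DeltaF R n) (x : PhiF R n),
        p (Submodule.Quotient.mk y) (Submodule.Quotient.mk x) = pairDFF y x) ∧
      ∀ k : ℕ,
        Function.Bijective (p.domRestrict₁₂ (SiopK R n k) (PoisK R n k)) ∧
        Function.Bijective (p.flip.domRestrict₁₂ (PoisK R n k) (SiopK R n k)) := by
  exact ⟨pp R n, pp_mk R n, pp_perfect R n⟩

end GTPairing
end
end

section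
/- Let B be a bracket expression containing a sub-expression [X, Y·Z], let B' be obtained from B by substituting Y·[X,Z] for [X, Y·Z], and let B'' be obtained by substituting [X,Y]·Z. Then for every Diagram D, ⟨D, B⟩ = ⟨D, B'⟩ + ⟨D, B''⟩; that is, the configuration pairing on bracket expressions respects the Leibniz rule. -/
open scoped Classical

noncomputable section

namespace GTPairing

/-- Formal bracket expressions in variables `x_a`, built from a binary bracket `[,]`
(`br`) and a binary product `·` (`mul`). -/
inductive BExpr : Type
  | var (a : ℕ) : BExpr
  | br (x y : BExpr) : BExpr
  | mul (x y : BExpr) : BExpr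
  deriving DecidableEq

namespace BExpr

/-- The variables occurring in a bracket expression, in left-to-right order. -/
def varsL : BExpr → List ℕ
  | .var a => [a]
  | .br x y => x.varsL ++ y.varsL
  | .mul x y => x.varsL ++ y.varsL

/-- The bracket pairs of a bracket expression (as the subexpressions they enclose), in
left-to-right order. -/
def brList : BExpr → List BExpr
  | .var _ => []
  | .br x y => x.brList ++ (BExpr.br x y :: y.brList)
  | .mul x y => x.brList ++ y.brList

/-- `bnadir B i j` is the innermost pair of brackets of `B` containing both `x_i` and
`x_j`, when `x_i` and `x_j` are bracketed together before being multiplied (otherwise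
`β` is undefined at this pair, yielding `none`); the Boolean records whether `x_i`
appears to the left of `x_j`. -/
def bnadir : BExpr → ℕ → ℕ → Option (BExpr × Bool)
  | .var _, _, _ => none
  | .br x y, i, j =>
    if i ∈ x.varsL ∧ j ∈ y.varsL then some (.br x y, true)
    else if j ∈ x.varsL ∧ i ∈ y.varsL then some (.br x y, false)
    else if i ∈ x.varsL ∧ j ∈ x.varsL then x.bnadir i j
    else if i ∈ y.varsL ∧ j ∈ y.varsL then y.bnadir i j
    else none
  | .mul x y, i, j =>
    if i ∈ x.varsL ∧ j ∈ x.varsL then x.bnadir i j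
    else if i ∈ y.varsL ∧ j ∈ y.varsL then y.bnadir i j
    else none

end BExpr

/-- The configuration pairing between a Diagram (a multiset of oriented edges) and a
bracket expression: `0` unless `β_{D,B}` is defined on every edge and is a bijection
onto the bracket pairs of `B`, in which case it is `(-1)^k` where `k` is the number of
edges `i → j` for which `x_j` appears to the left of `x_i`. -/
def pairDB (E : Multiset (ℕ × ℕ)) (B : BExpr) : ℤ :=
  if E.map (fun e => (B.bnadir e.1 e.2).map Prod.fst)
      = ((B.brList.map some : List (Option BExpr)) : Multiset (Option BExpr))
  then (-1) ^ (Multiset.card (E.filter fun e => (B.bnadir e.1 e.2).map Prod.snd = some false))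
  else 0

/-- One-hole contexts for bracket expressions. -/
inductive BCtx : Type
  | hole : BCtx
  | brL (c : BCtx) (y : BExpr) : BCtx
  | brR (x : BExpr) (c : BCtx) : BCtx
  | mulL (c : BCtx) (y : BExpr) : BCtx
  | mulR (x : BExpr) (c : BCtx) : BCtx

/-- Filling the hole of a context with a bracket expression. -/
def BCtx.fill : BCtx → BExpr → BExpr
  | .hole, e => e
  | .brL c y, e => .br (c.fill e) y
  | .brR x c, e => .br x (c.fill e)
  | .mulL c y, e => .mul (c.fill e) y
  | .mulR x c, e => .mul x (c.fill e)

/-- A bracket expression on `{0,…,n-1}`, each variable used exactly once. -/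
def IsBExprOn (n : ℕ) (B : BExpr) : Prop :=
  B.varsL.Nodup ∧ B.varsL.toFinset = Finset.range n

def BExprOn (n : ℕ) : Type := {B : BExpr // IsBExprOn n B}

variable (R : Type) [CommRing R]

/-- The free module on bracket expressions in `x_1,…,x_n`, each variable used once. -/
abbrev BExprF (n : ℕ) : Type := BExprOn n →₀ R

/-- The relations on bracket expressions: antisymmetry and the Jacobi identity for the
bracket, commutativity of the product, and the Leibniz rule, each applied inside an
arbitrary context. -/
def brelSet (n : ℕ) : Set (BExprF R n) :=
  { x | ∃ (c : BCtx) (X Y : BExpr) (B₁ B₂ : BExprOn n),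
      B₁.1 = c.fill (.br X Y) ∧ B₂.1 = c.fill (.br Y X) ∧
      x = Finsupp.single B₁ 1 + Finsupp.single B₂ 1 } ∪
  { x | ∃ (c : BCtx) (X Y Z : BExpr) (B₁ B₂ B₃ : BExprOn n),
      B₁.1 = c.fill (.br (.br X Y) Z) ∧ B₂.1 = c.fill (.br (.br Y Z) X) ∧
      B₃.1 = c.fill (.br (.br Z X) Y) ∧
      x = Finsupp.single B₁ 1 + Finsupp.single B₂ 1 + Finsupp.single B₃ 1 } ∪
  { x | ∃ (c : BCtx) (X Y : BExpr) (B₁ B₂ : BExprOn n),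
      B₁.1 = c.fill (.mul X Y) ∧ B₂.1 = c.fill (.mul Y X) ∧
      x = Finsupp.single B₁ 1 - Finsupp.single B₂ 1 } ∪
  { x | ∃ (c : BCtx) (X Y Z : BExpr) (B₁ B₂ B₃ : BExprOn n),
      B₁.1 = c.fill (.br X (.mul Y Z)) ∧ B₂.1 = c.fill (.mul (.br X Y) Z) ∧
      B₃.1 = c.fill (.mul Y (.br X Z)) ∧
      x = Finsupp.single B₁ 1 - Finsupp.single B₂ 1 - Finsupp.single B₃ 1 }

/-- The submodule of relations among bracket expressions. -/
def Brel (n : ℕ) : Submodule R (BExprF R n) := Submodule.span R (brelSet R n)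

end GTPairing

namespace GTPairing

/-- The abstract form of the pairing. -/
def qPair (E : Multiset (ℕ × ℕ)) (g : ℕ × ℕ → Option (BExpr × Bool)) (L : Multiset BExpr) : ℤ :=
  if E.map (fun e => (g e).map Prod.fst) = L.map some
  then (-1) ^ (Multiset.card (E.filter fun e => (g e).map Prod.snd = some false))
  else 0

theorem pairDB_eq_qPair (E : Multiset (ℕ × ℕ)) (B : BExpr) :
    pairDB E B = qPair E (fun e => B.bnadir e.1 e.2) (B.brList : Multiset BExpr) := by
  unfold pairDB qPair
  simp only [Multiset.map_coe]

theorem qPair_congr {E : Multiset (ℕ × ℕ)} {g g' : ℕ × ℕ → Option (BExpr × Bool)}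
    {L : Multiset BExpr} (h : ∀ e ∈ E, g e = g' e) : qPair E g L = qPair E g' L := by
  unfold qPair
  have h1 : E.map (fun e => (g e).map Prod.fst) = E.map (fun e => (g' e).map Prod.fst) :=
    Multiset.map_congr rfl (fun e he => by rw [h e he])
  have h2 : E.filter (fun e => (g e).map Prod.snd = some false)
      = E.filter (fun e => (g' e).map Prod.snd = some false) :=
    Multiset.filter_congr (fun e he => by rw [h e he])
  rw [h1, h2]

theorem qPair_none {E : Multiset (ℕ × ℕ)} {g : ℕ × ℕ → Option (BExpr × Bool)}
    {L : Multiset BExpr} {e : ℕ × ℕ} (he : e ∈ E) (h : g e = none) : qPair E g L = 0 := by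
  unfold qPair
  rw [if_neg]
  intro hh
  have h1 : none ∈ E.map (fun e => (g e).map Prod.fst) :=
    Multiset.mem_map.2 ⟨e, he, by simp [h]⟩
  rw [hh] at h1
  simp at h1

theorem qPair_add {E₁ E₂ : Multiset (ℕ × ℕ)} {g : ℕ × ℕ → Option (BExpr × Bool)}
    {L₁ L₂ : Multiset BExpr} (S : BExpr → Prop)
    (h1 : ∀ e ∈ E₁, ∀ b s, g e = some (b, s) → S b)
    (h2 : ∀ e ∈ E₂, ∀ b s, g e = some (b, s) → ¬ S b)
    (h3 : ∀ b ∈ L₁, S b) (h4 : ∀ b ∈ L₂, ¬ S b) :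
    qPair (E₁ + E₂) g (L₁ + L₂) = qPair E₁ g L₁ * qPair E₂ g L₂ := by
  by_cases hn : ∃ e ∈ E₁ + E₂, g e = none
  · obtain ⟨e, he, hg⟩ := hn
    rw [qPair_none he hg]
    rcases Multiset.mem_add.1 he with h | h
    · rw [qPair_none h hg]; simp
    · rw [qPair_none h hg]; simp
  push Not at hn
  have key : (E₁ + E₂).map (fun e => (g e).map Prod.fst) = (L₁ + L₂).map some ↔
      E₁.map (fun e => (g e).map Prod.fst) = L₁.map some ∧
      E₂.map (fun e => (g e).map Prod.fst) = L₂.map some := by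
    constructor
    · intro h
      rw [Multiset.map_add, Multiset.map_add] at h
      let p : Option BExpr → Prop := fun o => ∃ b, o = some b ∧ S b
      have a1 : ∀ o ∈ E₁.map (fun e => (g e).map Prod.fst), p o := by
        intro o ho
        obtain ⟨e, he, rfl⟩ := Multiset.mem_map.1 ho
        obtain ⟨⟨b, s⟩, hb⟩ := Option.ne_none_iff_exists'.1 (hn e (Multiset.mem_add.2 (Or.inl he)))
        exact ⟨b, by simp [hb], h1 e he b s hb⟩
      have a2 : ∀ o ∈ E₂.map (fun e => (g e).map Prod.fst), ¬ p o := by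
        intro o ho
        obtain ⟨e, he, rfl⟩ := Multiset.mem_map.1 ho
        obtain ⟨⟨b, s⟩, hb⟩ := Option.ne_none_iff_exists'.1 (hn e (Multiset.mem_add.2 (Or.inr he)))
        rintro ⟨b', hb', hS⟩
        simp [hb] at hb'
        subst hb'
        exact h2 e he b s hb hS
      have a3 : ∀ o ∈ L₁.map some, p o := by
        intro o ho
        obtain ⟨b, hb, rfl⟩ := Multiset.mem_map.1 ho
        exact ⟨b, rfl, h3 b hb⟩
      have a4 : ∀ o ∈ L₂.map some, ¬ p o := by
        intro o ho
        obtain ⟨b, hb, rfl⟩ := Multiset.mem_map.1 ho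
        rintro ⟨b', hb', hS⟩
        simp at hb'
        subst hb'
        exact h4 b hb hS
      have hf := congrArg (Multiset.filter p) h
      rw [Multiset.filter_add, Multiset.filter_add, Multiset.filter_eq_self.2 a1,
        Multiset.filter_eq_self.2 a3, Multiset.filter_eq_nil.2 a2, Multiset.filter_eq_nil.2 a4,
        add_zero, add_zero] at hf
      refine ⟨hf, ?_⟩
      rw [hf] at h
      exact add_left_cancel h
    · rintro ⟨h, h'⟩
      rw [Multiset.map_add, Multiset.map_add, h, h']
  unfold qPair
  rw [Multiset.filter_add, Multiset.card_add, pow_add]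
  by_cases c1 : E₁.map (fun e => (g e).map Prod.fst) = L₁.map some <;>
  by_cases c2 : E₂.map (fun e => (g e).map Prod.fst) = L₂.map some
  · rw [if_pos (key.2 ⟨c1, c2⟩), if_pos c1, if_pos c2]
  · rw [if_neg (fun h => c2 (key.1 h).2), if_neg c2, mul_zero]
  · rw [if_neg (fun h => c1 (key.1 h).1), if_neg c1, zero_mul]
  · rw [if_neg (fun h => c1 (key.1 h).1), if_neg c1, zero_mul]

theorem qPair_single {E : Multiset (ℕ × ℕ)} {g : ℕ × ℕ → Option (BExpr × Bool)} {b : BExpr}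
    (h : ∀ e ∈ E, (g e).map Prod.fst = some b) :
    qPair E g {b} = if Multiset.card E = 1
      then (-1) ^ (Multiset.card (E.filter fun e => (g e).map Prod.snd = some false)) else 0 := by
  unfold qPair
  have h1 : E.map (fun e => (g e).map Prod.fst) = Multiset.replicate (Multiset.card E) (some b) := by
    rw [← Multiset.map_const']
    exact Multiset.map_congr rfl h
  have h2 : (E.map (fun e => (g e).map Prod.fst) = Multiset.map some {b}) ↔
      Multiset.card E = 1 := by
    rw [h1, Multiset.map_singleton, ← Multiset.replicate_one]
    constructor
    · intro hh
      simpa using congrArg Multiset.card hh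
    · intro hh
      rw [hh]
  simp only [h2]

theorem varsL_exists (B : BExpr) : ∃ a, a ∈ B.varsL := by
  induction B with
  | var a => exact ⟨a, by simp [BExpr.varsL]⟩
  | br x y hx hy => obtain ⟨a, ha⟩ := hx; exact ⟨a, by simp [BExpr.varsL, ha]⟩
  | mul x y hx hy => obtain ⟨a, ha⟩ := hx; exact ⟨a, by simp [BExpr.varsL, ha]⟩

theorem brList_vars {B b : BExpr} (h : b ∈ B.brList) : ∀ a ∈ b.varsL, a ∈ B.varsL := by
  induction B with
  | var a => simp [BExpr.brList] at h
  | br x y hx hy =>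
    intro a ha
    simp only [BExpr.brList, List.mem_append, List.mem_cons] at h
    rcases h with h | h | h
    · simp [BExpr.varsL, hx h a ha]
    · subst h; exact ha
    · simp [BExpr.varsL, hy h a ha]
  | mul x y hx hy =>
    intro a ha
    simp only [BExpr.brList, List.mem_append] at h
    rcases h with h | h
    · simp [BExpr.varsL, hx h a ha]
    · simp [BExpr.varsL, hy h a ha]

theorem bnadir_mem {B b : BExpr} {i j : ℕ} {s : Bool} (h : B.bnadir i j = some (b, s)) :
    b ∈ B.brList := by
  induction B with
  | var a => simp [BExpr.bnadir] at h
  | br x y hx hy =>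
    simp only [BExpr.bnadir] at h
    simp only [BExpr.brList, List.mem_append, List.mem_cons]
    split_ifs at h
    · simp at h; simp [h.1]
    · simp at h; simp [h.1]
    · exact Or.inl (hx h)
    · exact Or.inr (Or.inr (hy h))
  | mul x y hx hy =>
    simp only [BExpr.bnadir] at h
    simp only [BExpr.brList, List.mem_append]
    split_ifs at h
    · exact Or.inl (hx h)
    · exact Or.inr (hy h)

/-- Both ends of the edge lie in `B`. -/
def inn (B : BExpr) (e : ℕ × ℕ) : Prop := e.1 ∈ B.varsL ∧ e.2 ∈ B.varsL

/-- The edge joins `x` to `y`. -/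
def crs (x y : BExpr) (e : ℕ × ℕ) : Prop :=
  (e.1 ∈ x.varsL ∧ e.2 ∈ y.varsL) ∨ (e.2 ∈ x.varsL ∧ e.1 ∈ y.varsL)

/-- The edge goes backwards from `y` to `x`. -/
def bck (x y : BExpr) (e : ℕ × ℕ) : Prop := e.2 ∈ x.varsL ∧ e.1 ∈ y.varsL

/-- The signed contribution of the edges joining `x` to `y`. -/
def sgnC (E : Multiset (ℕ × ℕ)) (x y : BExpr) : ℤ :=
  if Multiset.card (E.filter (crs x y)) = 1
  then (-1) ^ Multiset.card (E.filter (bck x y)) else 0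

def Disj (x y : BExpr) : Prop := ∀ a, a ∈ x.varsL → a ∈ y.varsL → False

theorem split_two {E : Multiset (ℕ × ℕ)} {p q : ℕ × ℕ → Prop}
    (hall : ∀ e ∈ E, p e ∨ q e) (hd : ∀ e, p e → q e → False) :
    E = E.filter p + E.filter q := by
  conv_lhs => rw [← Multiset.filter_add_not p E]
  congr 1
  refine Multiset.filter_congr (fun e he => ?_)
  have := hall e he
  have := hd e
  tauto

theorem split_three {E : Multiset (ℕ × ℕ)} {p q r : ℕ × ℕ → Prop}
    (hall : ∀ e ∈ E, p e ∨ q e ∨ r e) (hpq : ∀ e, p e → q e → False)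
    (hpr : ∀ e, p e → r e → False) (hqr : ∀ e, q e → r e → False) :
    E = E.filter p + (E.filter q + E.filter r) := by
  conv_lhs => rw [← Multiset.filter_add_not p E]
  congr 1
  conv_lhs => rw [← Multiset.filter_add_not q (E.filter (fun e => ¬ p e))]
  rw [Multiset.filter_filter, Multiset.filter_filter]
  congr 1 <;>
  · refine Multiset.filter_congr (fun e he => ?_)
    have := hall e he
    have := hpq e
    have := hpr e
    have := hqr e
    tauto

theorem pairDB_mul {E : Multiset (ℕ × ℕ)} {x y : BExpr} (hd : Disj x y) :
    pairDB E (.mul x y) = if ∀ e ∈ E, inn x e ∨ inn y e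
      then pairDB (E.filter (inn x)) x * pairDB (E.filter (inn y)) y else 0 := by
  split_ifs with hall
  · rw [pairDB_eq_qPair, pairDB_eq_qPair, pairDB_eq_qPair]
    have hs := split_two hall (fun e h1 h2 => hd _ h1.1 h2.1)
    have gx : ∀ e ∈ E.filter (inn x), (BExpr.mul x y).bnadir e.1 e.2 = x.bnadir e.1 e.2 := by
      intro e he
      have h : e.1 ∈ x.varsL ∧ e.2 ∈ x.varsL := (Multiset.mem_filter.1 he).2
      simp only [BExpr.bnadir]
      rw [if_pos h]
    have gy : ∀ e ∈ E.filter (inn y), (BExpr.mul x y).bnadir e.1 e.2 = y.bnadir e.1 e.2 := by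
      intro e he
      have h : e.1 ∈ y.varsL ∧ e.2 ∈ y.varsL := (Multiset.mem_filter.1 he).2
      simp only [BExpr.bnadir]
      rw [if_neg (fun h' => hd _ h'.1 h.1), if_pos h]
    conv_lhs => rw [hs]
    have hdl : ∀ b, b ∈ x.brList → b ∈ y.brList → False := by
      intro b h1 h2
      obtain ⟨a, ha⟩ := varsL_exists b
      exact hd a (brList_vars h1 a ha) (brList_vars h2 a ha)
    simp only [BExpr.brList, ← Multiset.coe_add]
    rw [qPair_add (fun b => b ∈ x.brList), qPair_congr gx, qPair_congr gy]
    · intro e he b s hb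
      rw [gx e he] at hb
      exact bnadir_mem hb
    · intro e he b s hb h
      rw [gy e he] at hb
      exact hdl b h (bnadir_mem hb)
    · intro b hb; simpa using hb
    · intro b hb h
      exact hdl b h (by simpa using hb)
  · push Not at hall
    obtain ⟨e, he, h1, h2⟩ := hall
    rw [pairDB_eq_qPair]
    refine qPair_none he ?_
    simp only [BExpr.bnadir]
    unfold inn at h1 h2
    rw [if_neg h1, if_neg h2]

theorem pairDB_br {E : Multiset (ℕ × ℕ)} {x y : BExpr} (hd : Disj x y) :
    pairDB E (.br x y) = if ∀ e ∈ E, inn x e ∨ crs x y e ∨ inn y e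
      then pairDB (E.filter (inn x)) x * (sgnC E x y * pairDB (E.filter (inn y)) y) else 0 := by
  split_ifs with hall
  · rw [pairDB_eq_qPair, pairDB_eq_qPair, pairDB_eq_qPair]
    have hs : E = E.filter (inn x) + (E.filter (crs x y) + E.filter (inn y)) := by
      refine split_three hall ?_ ?_ ?_
      · rintro e h1 (h2 | h2)
        · exact hd _ h1.2 h2.2
        · exact hd _ h1.1 h2.2
      · intro e h1 h2
        exact hd _ h1.1 h2.1
      · rintro e (h1 | h1) h2
        · exact hd _ h1.1 h2.1
        · exact hd _ h1.1 h2.2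
    have gx : ∀ e ∈ E.filter (inn x), (BExpr.br x y).bnadir e.1 e.2 = x.bnadir e.1 e.2 := by
      intro e he
      have h : e.1 ∈ x.varsL ∧ e.2 ∈ x.varsL := (Multiset.mem_filter.1 he).2
      simp only [BExpr.bnadir]
      rw [if_neg (fun h' => hd _ h.2 h'.2), if_neg (fun h' => hd _ h.1 h'.2), if_pos h]
    have gy : ∀ e ∈ E.filter (inn y), (BExpr.br x y).bnadir e.1 e.2 = y.bnadir e.1 e.2 := by
      intro e he
      have h : e.1 ∈ y.varsL ∧ e.2 ∈ y.varsL := (Multiset.mem_filter.1 he).2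
      simp only [BExpr.bnadir]
      rw [if_neg (fun h' => hd _ h'.1 h.1), if_neg (fun h' => hd _ h'.1 h.2),
        if_neg (fun h' => hd _ h'.1 h.1), if_pos h]
    have gc : ∀ e, crs x y e → (BExpr.br x y).bnadir e.1 e.2
        = some (.br x y, !decide (bck x y e)) := by
      intro e h
      simp only [BExpr.bnadir]
      rcases h with h | h
      · have : ¬ bck x y e := fun h' => hd _ h.1 h'.2
        rw [if_pos h]; simp [this]
      · have h' : bck x y e := h
        rw [if_neg (fun h' => hd _ h'.1 h.2), if_pos h]; simp [h']
    conv_lhs => rw [hs]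
    have hdl : ∀ b, b ∈ x.brList → b ∈ y.brList → False := by
      intro b h1 h2
      obtain ⟨a, ha⟩ := varsL_exists b
      exact hd a (brList_vars h1 a ha) (brList_vars h2 a ha)
    have hx : BExpr.br x y ∉ x.brList := by
      intro h
      obtain ⟨a, ha⟩ := varsL_exists y
      exact hd a (brList_vars h a (by simp [BExpr.varsL, ha])) ha
    have hy : BExpr.br x y ∉ y.brList := by
      intro h
      obtain ⟨a, ha⟩ := varsL_exists x
      exact hd a ha (brList_vars h a (by simp [BExpr.varsL, ha]))
    have hl : ((BExpr.br x y).brList : Multiset BExpr)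
        = (x.brList : Multiset BExpr) + ({BExpr.br x y} + (y.brList : Multiset BExpr)) := by
      simp [BExpr.brList, ← Multiset.coe_add, ← Multiset.cons_coe]
    rw [hl]
    rw [qPair_add (fun b => b ∈ x.brList), qPair_congr gx,
      qPair_add (fun b => b = BExpr.br x y), qPair_congr gy, qPair_single]
    · congr 2
      unfold sgnC
      have : Multiset.filter (fun e => ((BExpr.br x y).bnadir e.1 e.2).map Prod.snd = some false)
          (E.filter (crs x y)) = E.filter (bck x y) := by
        rw [Multiset.filter_filter]
        refine Multiset.filter_congr (fun e _ => ?_)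
        constructor
        · rintro ⟨h1, h2⟩
          rw [gc e h2] at h1
          simpa using h1
        · intro h
          have h2 : crs x y e := Or.inr h
          refine ⟨?_, h2⟩
          rw [gc e h2]
          simpa using h
      rw [this]
    · intro e he
      rw [gc e (Multiset.mem_filter.1 he).2]; rfl
    · intro e he b s hb
      rw [gc e (Multiset.mem_filter.1 he).2] at hb
      simp at hb; exact hb.1.symm
    · intro e he b s hb h
      rw [gy e he] at hb
      subst h
      exact hy (bnadir_mem hb)
    · intro b hb; simpa using hb
    · intro b hb h
      subst h
      exact hy (by simpa using hb)
    · intro e he b s hb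
      rw [gx e he] at hb
      exact bnadir_mem hb
    · intro e he b s hb h
      rcases Multiset.mem_add.1 he with he | he
      · rw [gc e (Multiset.mem_filter.1 he).2] at hb
        simp at hb
        rw [← hb.1] at h
        exact hx h
      · rw [gy e he] at hb
        exact hdl b h (bnadir_mem hb)
    · intro b hb; simpa using hb
    · intro b hb h
      rcases Multiset.mem_add.1 hb with hb | hb
      · simp at hb
        subst hb
        exact hx h
      · exact hdl b h (by simpa using hb)
  · push Not at hall
    obtain ⟨e, he, h1, h2, h3⟩ := hall
    rw [pairDB_eq_qPair]
    refine qPair_none he ?_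
    simp only [BExpr.bnadir]
    unfold inn at h1 h3
    rw [if_neg (fun h => h2 (Or.inl h)), if_neg (fun h => h2 (Or.inr h)), if_neg h1, if_neg h3]

theorem filter_inn_of_le {E : Multiset (ℕ × ℕ)} {p : ℕ × ℕ → Prop} {q : ℕ × ℕ → Prop}
    (h : ∀ e, q e → p e) : (E.filter p).filter q = E.filter q := by
  rw [Multiset.filter_filter]
  refine Multiset.filter_congr (fun e _ => ?_)
  have := h e
  tauto

set_option maxHeartbeats 2000000 in
theorem leibniz_base (E : Multiset (ℕ × ℕ)) (X Y Z : BExpr)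
    (hXY : Disj X Y) (hXZ : Disj X Z) (hYZ : Disj Y Z) :
    pairDB E (.br X (.mul Y Z)) =
      pairDB E (.mul Y (.br X Z)) + pairDB E (.mul (.br X Y) Z) := by
  have d1 : Disj X (.mul Y Z) := by
    intro a h1 h2
    simp only [BExpr.varsL, List.mem_append] at h2
    exact h2.elim (hXY a h1) (hXZ a h1)
  have d2 : Disj Y (.br X Z) := by
    intro a h1 h2
    simp only [BExpr.varsL, List.mem_append] at h2
    exact h2.elim (fun h => hXY a h h1) (hYZ a h1)
  have d3 : Disj (.br X Y) Z := by
    intro a h2 h1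
    simp only [BExpr.varsL, List.mem_append] at h2
    exact h2.elim (fun h => hXZ a h h1) (fun h => hYZ a h h1)
  rw [pairDB_br d1, pairDB_mul hYZ, pairDB_mul d2, pairDB_br hXZ, pairDB_mul d3, pairDB_br hXY]
  have mm : ∀ e, inn (.mul Y Z) e ↔
      (e.1 ∈ Y.varsL ∨ e.1 ∈ Z.varsL) ∧ (e.2 ∈ Y.varsL ∨ e.2 ∈ Z.varsL) := by
    intro e; simp [inn, BExpr.varsL]
  have m2 : ∀ e, inn (.br X Z) e ↔
      (e.1 ∈ X.varsL ∨ e.1 ∈ Z.varsL) ∧ (e.2 ∈ X.varsL ∨ e.2 ∈ Z.varsL) := by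
    intro e; simp [inn, BExpr.varsL]
  have m3 : ∀ e, inn (.br X Y) e ↔
      (e.1 ∈ X.varsL ∨ e.1 ∈ Y.varsL) ∧ (e.2 ∈ X.varsL ∨ e.2 ∈ Y.varsL) := by
    intro e; simp [inn, BExpr.varsL]
  have iXX := fun e (h : inn X e) => (m2 e).2 ⟨Or.inl h.1, Or.inl h.2⟩
  have iXX' := fun e (h : inn X e) => (m3 e).2 ⟨Or.inl h.1, Or.inl h.2⟩
  have iY := fun e (h : inn Y e) => (mm e).2 ⟨Or.inl h.1, Or.inl h.2⟩
  have iZ := fun e (h : inn Z e) => (mm e).2 ⟨Or.inr h.1, Or.inr h.2⟩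
  have iY' := fun e (h : inn Y e) => (m3 e).2 ⟨Or.inr h.1, Or.inr h.2⟩
  have iZ' := fun e (h : inn Z e) => (m2 e).2 ⟨Or.inr h.1, Or.inr h.2⟩
  rw [filter_inn_of_le iXX, filter_inn_of_le iXX', filter_inn_of_le iY, filter_inn_of_le iZ,
    filter_inn_of_le iY', filter_inn_of_le iZ']
  have cZ : ∀ e, crs X Z e → inn (.br X Z) e := by
    intro e h; rw [m2]; unfold crs at h; grind
  have cY : ∀ e, crs X Y e → inn (.br X Y) e := by
    intro e h; rw [m3]; unfold crs at h; grind
  have bZ : ∀ e, bck X Z e → crs X Z e := fun e h => Or.inr h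
  have bY : ∀ e, bck X Y e → crs X Y e := fun e h => Or.inr h
  have sZ : sgnC (E.filter (inn (.br X Z))) X Z = sgnC E X Z := by
    unfold sgnC
    rw [filter_inn_of_le cZ, filter_inn_of_le (fun e h => cZ e (bZ e h))]
  have sY : sgnC (E.filter (inn (.br X Y))) X Y = sgnC E X Y := by
    unfold sgnC
    rw [filter_inn_of_le cY, filter_inn_of_le (fun e h => cY e (bY e h))]
  rw [sZ, sY]
  have k1 : E.filter (crs X (.mul Y Z)) = E.filter (crs X Y) + E.filter (crs X Z) := by
    rw [split_two (E := E.filter (crs X (.mul Y Z))) (p := crs X Y) (q := crs X Z)]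
    · congr 1 <;> apply filter_inn_of_le <;> intro e h <;>
        simp only [crs, BExpr.varsL, List.mem_append] at h ⊢ <;> grind
    · intro e he
      have h := (Multiset.mem_filter.1 he).2
      simp only [crs, BExpr.varsL, List.mem_append] at h ⊢
      grind
    · rintro e (h1 | h1) (h2 | h2)
      · exact hYZ _ h1.2 h2.2
      · exact hXY _ h2.1 h1.2
      · exact hXY _ h2.1 h1.2
      · exact hYZ _ h1.2 h2.2
  have k2 : E.filter (bck X (.mul Y Z)) = E.filter (bck X Y) + E.filter (bck X Z) := by
    rw [split_two (E := E.filter (bck X (.mul Y Z))) (p := bck X Y) (q := bck X Z)]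
    · congr 1 <;> apply filter_inn_of_le <;> intro e h <;>
        simp only [bck, BExpr.varsL, List.mem_append] at h ⊢ <;> grind
    · intro e he
      have h := (Multiset.mem_filter.1 he).2
      simp only [bck, BExpr.varsL, List.mem_append] at h ⊢
      grind
    · rintro e h1 h2
      exact hYZ _ h1.2 h2.2
  have la : Multiset.card (E.filter (bck X Y)) ≤ Multiset.card (E.filter (crs X Y)) :=
    Multiset.card_le_card (Multiset.monotone_filter_right E bY)
  have lb : Multiset.card (E.filter (bck X Z)) ≤ Multiset.card (E.filter (crs X Z)) :=
    Multiset.card_le_card (Multiset.monotone_filter_right E bZ)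
  -- the global condition
  let G : Prop := ∀ e ∈ E, inn X e ∨ inn Y e ∨ inn Z e ∨ crs X Y e ∨ crs X Z e
  have zY : Multiset.card (E.filter (crs X Y)) = 0 ↔ ∀ e ∈ E, ¬ crs X Y e := by
    rw [Multiset.card_eq_zero, Multiset.filter_eq_nil]
  have zZ : Multiset.card (E.filter (crs X Z)) = 0 ↔ ∀ e ∈ E, ¬ crs X Z e := by
    rw [Multiset.card_eq_zero, Multiset.filter_eq_nil]
  have g1 : ((∀ e ∈ E, inn X e ∨ crs X (.mul Y Z) e ∨ inn (.mul Y Z) e) ∧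
      (∀ e ∈ E.filter (inn (.mul Y Z)), inn Y e ∨ inn Z e)) ↔ G := by
    simp only [Multiset.mem_filter]
    constructor
    · rintro ⟨h1, h2⟩ e he
      have h1 := h1 e he
      have h2 := h2 e
      simp only [crs, BExpr.varsL, List.mem_append] at h1 ⊢
      grind
    · intro h
      refine ⟨fun e he => ?_, fun e he => ?_⟩
      · have h := h e he
        have := iY e
        have := iZ e
        simp only [crs, BExpr.varsL, List.mem_append] at h ⊢
        grind
      · have h := h e he.1
        have h2 := (mm e).1 he.2
        have a1 := hXY e.1
        have a2 := hXY e.2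
        have a3 := hXZ e.1
        have a4 := hXZ e.2
        simp only [inn, crs] at h ⊢
        grind
  have g2 : ((∀ e ∈ E, inn Y e ∨ inn (.br X Z) e) ∧
      (∀ e ∈ E.filter (inn (.br X Z)), inn X e ∨ crs X Z e ∨ inn Z e)) ↔
      G ∧ Multiset.card (E.filter (crs X Y)) = 0 := by
    rw [zY]
    simp only [Multiset.mem_filter]
    constructor
    · rintro ⟨h1, h2⟩
      refine ⟨fun e he => ?_, fun e he hc => ?_⟩
      · have h1 := h1 e he
        have h2 := h2 e
        grind
      · have h1 := h1 e he
        rw [m2] at h1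
        have a1 := hXY e.1
        have a2 := hXY e.2
        have a3 := hYZ e.1
        have a4 := hYZ e.2
        simp only [inn, crs] at h1 hc
        grind
    · rintro ⟨h, hn⟩
      refine ⟨fun e he => ?_, fun e he => ?_⟩
      · have h := h e he
        have hn := hn e he
        have := iXX e
        have := iZ' e
        have := cZ e
        grind
      · have h := h e he.1
        have hn := hn e he.1
        have a := (m2 e).1 he.2
        have a1 := hXY e.1
        have a3 := hYZ e.1
        have b : ¬ inn Y e := by
          intro b
          have := b.1
          grind
        grind
  have g3 : ((∀ e ∈ E, inn (.br X Y) e ∨ inn Z e) ∧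
      (∀ e ∈ E.filter (inn (.br X Y)), inn X e ∨ crs X Y e ∨ inn Y e)) ↔
      G ∧ Multiset.card (E.filter (crs X Z)) = 0 := by
    rw [zZ]
    simp only [Multiset.mem_filter]
    constructor
    · rintro ⟨h1, h2⟩
      refine ⟨fun e he => ?_, fun e he hc => ?_⟩
      · have h1 := h1 e he
        have h2 := h2 e
        grind
      · have h1 := h1 e he
        rw [m3] at h1
        have a1 := hXZ e.1
        have a2 := hXZ e.2
        have a3 := hYZ e.1
        have a4 := hYZ e.2
        simp only [inn, crs] at h1 hc
        grind
    · rintro ⟨h, hn⟩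
      refine ⟨fun e he => ?_, fun e he => ?_⟩
      · have h := h e he
        have hn := hn e he
        have := iXX' e
        have := iY' e
        have := cY e
        grind
      · have h := h e he.1
        have hn := hn e he.1
        have a := (m3 e).1 he.2
        have a1 := hXZ e.1
        have a3 := hYZ e.1
        have b : ¬ inn Z e := by
          intro b
          have := b.1
          grind
        grind
  have s1 : sgnC E X (.mul Y Z) =
      (if Multiset.card (E.filter (crs X Y)) = 0 then sgnC E X Z else 0) +
      (if Multiset.card (E.filter (crs X Z)) = 0 then sgnC E X Y else 0) := by
    unfold sgnC
    rw [k1, k2, Multiset.card_add, Multiset.card_add]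
    generalize Multiset.card (E.filter (crs X Y)) = a at la
    generalize Multiset.card (E.filter (crs X Z)) = b at lb
    generalize Multiset.card (E.filter (bck X Y)) = a' at la
    generalize Multiset.card (E.filter (bck X Z)) = b' at lb
    by_cases ha : a = 0
    · subst ha
      obtain rfl : a' = 0 := by omega
      by_cases hb : b = 0 <;> simp [hb]
    · by_cases hb : b = 0
      · subst hb
        obtain rfl : b' = 0 := by omega
        simp [ha]
      · have : a + b ≠ 1 := by omega
        simp [ha, hb, this]
  clear_value G
  generalize pairDB (E.filter (inn X)) X = PX
  generalize pairDB (E.filter (inn Y)) Y = PY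
  generalize pairDB (E.filter (inn Z)) Z = PZ
  have r1 : ∀ (P Q : Prop) [Decidable P] [Decidable Q] (u v w : ℤ), (if P then u * (v * if Q then w else 0) else 0)
      = if P ∧ Q then u * (v * w) else 0 := by
    intro P Q _ _ u v w; by_cases P <;> by_cases Q <;> simp [*]
  have r2 : ∀ (P Q : Prop) [Decidable P] [Decidable Q] (u w : ℤ), (if P then (u * if Q then w else 0) else 0)
      = if P ∧ Q then u * w else 0 := by
    intro P Q _ _ u w; by_cases P <;> by_cases Q <;> simp [*]
  have r3 : ∀ (P Q : Prop) [Decidable P] [Decidable Q] (u w : ℤ), (if P then ((if Q then w else 0) * u) else 0)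
      = if P ∧ Q then w * u else 0 := by
    intro P Q _ _ u w; by_cases P <;> by_cases Q <;> simp [*]
  rw [r1, r2, r3, if_congr g1 rfl rfl, if_congr g2 rfl rfl, if_congr g3 rfl rfl, s1]
  by_cases hG : G
  · simp only [hG, true_and, if_true]
    split_ifs <;> ring
  · simp [hG]

theorem leibniz_ctx (c : BCtx) (U V W : BExpr)
    (hV : ∀ a, a ∈ V.varsL ↔ a ∈ U.varsL) (hW : ∀ a, a ∈ W.varsL ↔ a ∈ U.varsL)
    (hb : U.varsL.Nodup → ∀ E, pairDB E U = pairDB E V + pairDB E W) :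
    (∀ a, a ∈ (c.fill V).varsL ↔ a ∈ (c.fill U).varsL) ∧
    (∀ a, a ∈ (c.fill W).varsL ↔ a ∈ (c.fill U).varsL) ∧
    ((c.fill U).varsL.Nodup → ∀ E, pairDB E (c.fill U) =
      pairDB E (c.fill V) + pairDB E (c.fill W)) := by
  have inn_eq : ∀ {x x' : BExpr}, (∀ a, a ∈ x'.varsL ↔ a ∈ x.varsL) → inn x' = inn x := by
    intro x x' h; funext e; simp [inn, h]
  have crsl_eq : ∀ {x x' y : BExpr}, (∀ a, a ∈ x'.varsL ↔ a ∈ x.varsL) → crs x' y = crs x y := by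
    intro x x' y h; funext e; simp [crs, h]
  have crsr_eq : ∀ {x x' y : BExpr}, (∀ a, a ∈ x'.varsL ↔ a ∈ x.varsL) → crs y x' = crs y x := by
    intro x x' y h; funext e; simp [crs, h]
  have bckl_eq : ∀ {x x' y : BExpr}, (∀ a, a ∈ x'.varsL ↔ a ∈ x.varsL) → bck x' y = bck x y := by
    intro x x' y h; funext e; simp [bck, h]
  have bckr_eq : ∀ {x x' y : BExpr}, (∀ a, a ∈ x'.varsL ↔ a ∈ x.varsL) → bck y x' = bck y x := by
    intro x x' y h; funext e; simp [bck, h]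
  have sl_eq : ∀ {x x' y : BExpr} (E), (∀ a, a ∈ x'.varsL ↔ a ∈ x.varsL) →
      sgnC E x' y = sgnC E x y := by
    intro x x' y E h; unfold sgnC; rw [crsl_eq h, bckl_eq h]
  have sr_eq : ∀ {x x' y : BExpr} (E), (∀ a, a ∈ x'.varsL ↔ a ∈ x.varsL) →
      sgnC E y x' = sgnC E y x := by
    intro x x' y E h; unfold sgnC; rw [crsr_eq h, bckr_eq h]
  induction c with
  | hole => exact ⟨hV, hW, hb⟩
  | brL c y ih =>
    obtain ⟨h1, h2, h3⟩ := ih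
    refine ⟨?_, ?_, ?_⟩
    · intro a; simp [BCtx.fill, BExpr.varsL, h1]
    · intro a; simp [BCtx.fill, BExpr.varsL, h2]
    · intro hn E
      simp only [BCtx.fill, BExpr.varsL] at hn ⊢
      rw [List.nodup_append'] at hn
      have d1 : Disj (c.fill U) y := fun a ha hy => hn.2.2 ha hy
      have d2 : Disj (c.fill V) y := fun a ha hy => d1 a ((h1 a).1 ha) hy
      have d3 : Disj (c.fill W) y := fun a ha hy => d1 a ((h2 a).1 ha) hy
      rw [pairDB_br d1, pairDB_br d2, pairDB_br d3, inn_eq h1, inn_eq h2, crsl_eq h1, crsl_eq h2,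
        sl_eq E h1, sl_eq E h2, h3 hn.1]
      split_ifs <;> ring
  | brR x c ih =>
    obtain ⟨h1, h2, h3⟩ := ih
    refine ⟨?_, ?_, ?_⟩
    · intro a; simp [BCtx.fill, BExpr.varsL, h1]
    · intro a; simp [BCtx.fill, BExpr.varsL, h2]
    · intro hn E
      simp only [BCtx.fill, BExpr.varsL] at hn ⊢
      rw [List.nodup_append'] at hn
      have d1 : Disj x (c.fill U) := fun a ha hy => hn.2.2 ha hy
      have d2 : Disj x (c.fill V) := fun a ha hy => d1 a ha ((h1 a).1 hy)
      have d3 : Disj x (c.fill W) := fun a ha hy => d1 a ha ((h2 a).1 hy)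
      rw [pairDB_br d1, pairDB_br d2, pairDB_br d3, inn_eq h1, inn_eq h2, crsr_eq h1, crsr_eq h2,
        sr_eq E h1, sr_eq E h2, h3 hn.2.1]
      split_ifs <;> ring
  | mulL c y ih =>
    obtain ⟨h1, h2, h3⟩ := ih
    refine ⟨?_, ?_, ?_⟩
    · intro a; simp [BCtx.fill, BExpr.varsL, h1]
    · intro a; simp [BCtx.fill, BExpr.varsL, h2]
    · intro hn E
      simp only [BCtx.fill, BExpr.varsL] at hn ⊢
      rw [List.nodup_append'] at hn
      have d1 : Disj (c.fill U) y := fun a ha hy => hn.2.2 ha hy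
      have d2 : Disj (c.fill V) y := fun a ha hy => d1 a ((h1 a).1 ha) hy
      have d3 : Disj (c.fill W) y := fun a ha hy => d1 a ((h2 a).1 ha) hy
      rw [pairDB_mul d1, pairDB_mul d2, pairDB_mul d3, inn_eq h1, inn_eq h2, h3 hn.1]
      split_ifs <;> ring
  | mulR x c ih =>
    obtain ⟨h1, h2, h3⟩ := ih
    refine ⟨?_, ?_, ?_⟩
    · intro a; simp [BCtx.fill, BExpr.varsL, h1]
    · intro a; simp [BCtx.fill, BExpr.varsL, h2]
    · intro hn E
      simp only [BCtx.fill, BExpr.varsL] at hn ⊢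
      rw [List.nodup_append'] at hn
      have d1 : Disj x (c.fill U) := fun a ha hy => hn.2.2 ha hy
      have d2 : Disj x (c.fill V) := fun a ha hy => d1 a ha ((h1 a).1 hy)
      have d3 : Disj x (c.fill W) := fun a ha hy => d1 a ha ((h2 a).1 hy)
      rw [pairDB_mul d1, pairDB_mul d2, pairDB_mul d3, inn_eq h1, inn_eq h2, h3 hn.2.1]
      split_ifs <;> ring

end GTPairing

namespace GTPairing

/-- the configuration pairing between Diagrams and bracket expressions
respects the Leibniz rule: if `B` contains the subexpression `[X, Y·Z]`, `B'` is
obtained by substituting `Y·[X,Z]` for it and `B''` by substituting `[X,Y]·Z`, then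
`⟨D,B⟩ = ⟨D,B'⟩ + ⟨D,B''⟩` for every Diagram `D`. -/
theorem pairing_respects_leibniz (n : ℕ) (D : DiagOn n) (c : BCtx) (X Y Z : BExpr)
    (B B' B'' : BExprOn n)
    (hB : B.1 = c.fill (.br X (.mul Y Z)))
    (hB' : B'.1 = c.fill (.mul Y (.br X Z)))
    (hB'' : B''.1 = c.fill (.mul (.br X Y) Z)) :
    pairDB D.1 B.1 = pairDB D.1 B'.1 + pairDB D.1 B''.1 := by
  rw [hB, hB', hB'']
  refine (leibniz_ctx c _ _ _ ?_ ?_ ?_).2.2 (hB ▸ B.2.1) D.1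
  · intro a
    simp only [BExpr.varsL, List.mem_append]
    tauto
  · intro a
    simp only [BExpr.varsL, List.mem_append]
    tauto
  · intro hn E
    simp only [BExpr.varsL] at hn
    rw [List.nodup_append', List.nodup_append'] at hn
    exact leibniz_base E X Y Z
      (fun a h1 h2 => hn.2.2 h1 (List.mem_append.2 (Or.inl h2)))
      (fun a h1 h2 => hn.2.2 h1 (List.mem_append.2 (Or.inr h2)))
      (fun a h1 h2 => hn.2.1.2.2 h1 h2)

end GTPairing
end
end
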